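/- arXiv:2205.06685 — 3 statements merged into one kernel-verified Lean document; each statement's English description precedes it below -/
import Mathlib

section
/- Let (C_n) be the sequence defined by C_0 = 0, C_1 = 0, C_2 = 1, and C_{n+3} = C_{n+2} + C_n for n ≥ 0. Then for any prime p not dividing 2·3·29·31, p divides C_p if and only if there exist integers X, Y with p = X^2 + 31Y^2. -/
namespace Cord

abbrev E := QuadraticAlgebra ℤ (-1) (-1)

lemma norm_eq (x : E) : x.norm = x.re ^ 2 - x.re * x.im + x.im ^ 2 := by
  rw [QuadraticAlgebra.norm_def]; ring

lemma norm_mul_star (x : E) : ((x.norm : ℤ) : E) = x * star x := by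
  have := QuadraticAlgebra.algebraMap_norm_eq_mul_star x
  rw [← this]; simp

lemma norm_eq_zero' {x : E} (h : x.norm = 0) : x = 0 := by
  rw [norm_eq] at h
  have h1 : (2 * x.re - x.im) ^ 2 + 3 * x.im ^ 2 = 0 := by linear_combination 4 * h
  have h2 : x.im = 0 := by nlinarith [sq_nonneg (2 * x.re - x.im), sq_nonneg x.im]
  have h3 : x.re = 0 := by rw [h2] at h; nlinarith
  ext <;> simp [h2, h3]

lemma norm_nonneg' (x : E) : 0 ≤ x.norm := by
  rw [norm_eq]; nlinarith [sq_nonneg (2 * x.re - x.im), sq_nonneg x.im]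

instance : NoZeroDivisors E where
  eq_zero_or_eq_zero_of_mul_eq_zero {a b} h := by
    have : a.norm * b.norm = 0 := by rw [← map_mul, h, QuadraticAlgebra.norm_zero]
    rcases mul_eq_zero.mp this with h | h
    · exact Or.inl (norm_eq_zero' h)
    · exact Or.inr (norm_eq_zero' h)

instance : IsDomain E := NoZeroDivisors.to_isDomain E

def om : E := ⟨0, 1⟩

lemma om_sq : om ^ 2 + om + 1 = 0 := by
  rw [om, pow_two]; ext <;> simp [QuadraticAlgebra.re_one, QuadraticAlgebra.im_one]

lemma om_prim : IsPrimitiveRoot om 3 := by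
  rw [IsPrimitiveRoot.iff_orderOf]
  apply orderOf_eq_prime
  · linear_combination (om - 1) * om_sq
  · intro h
    have := congrArg QuadraticAlgebra.re h
    simp [om, QuadraticAlgebra.re_one] at this

section hom
variable {k : Type} [Field k] (φ : E →+* k)

lemma phi_eq (x : E) : φ x = (x.re : k) + (x.im : k) * φ om := by
  have : x = (x.re : E) + (x.im : E) * om := by ext <;> simp [om]
  conv_lhs => rw [this]
  simp

lemma phi_om : φ om ^ 2 + φ om + 1 = 0 := by
  have := congrArg φ om_sq
  simpa using this

lemma phi_star (x : E) : φ (star x) = (x.re : k) - x.im - (x.im : k) * φ om := by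
  rw [phi_eq]; simp; ring

lemma phi_norm (x : E) : φ x * φ (star x) = (x.norm : k) := by
  rw [← map_mul, ← norm_mul_star]; simp

lemma phi_om3 : φ om ^ 3 = 1 := by linear_combination (φ om - 1) * phi_om φ

/-- Frobenius on the image. -/
lemma phi_frob1 (q : ℕ) [Fact q.Prime] [CharP k q] (hq : q % 3 = 1) (x : E) :
    φ x ^ q = φ x := by
  rw [phi_eq, add_pow_char, mul_pow]
  have h1 : ∀ n : ℤ, (n : k) ^ q = n := fun n => by
    have := map_intCast (frobenius k q) n
    rwa [frobenius_def] at this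
  rw [h1, h1]
  congr 2
  obtain ⟨m, hm⟩ : ∃ m, q = 3 * m + 1 := ⟨q / 3, by omega⟩
  rw [hm, pow_succ, pow_mul, phi_om3]; simp

lemma phi_frob2 (q : ℕ) [Fact q.Prime] [CharP k q] (hq : q % 3 = 2) (x : E) :
    φ x ^ q = φ (star x) := by
  rw [phi_star, phi_eq, add_pow_char, mul_pow]
  have h1 : ∀ n : ℤ, (n : k) ^ q = n := fun n => by
    have := map_intCast (frobenius k q) n
    rwa [frobenius_def] at this
  rw [h1, h1]
  obtain ⟨m, hm⟩ : ∃ m, q = 3 * m + 2 := ⟨q / 3, by omega⟩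
  have : φ om ^ q = φ om ^ 2 := by
    rw [hm, pow_add, pow_mul, phi_om3]; simp
  rw [this]
  linear_combination (x.im : k) * phi_om φ

lemma eq_one_of_phi (h3 : (3 : k) ≠ 0) {x : E} (hx : x ^ 3 = 1) (h : φ x = 1) : x = 1 := by
  have : (x - 1) * (x ^ 2 + x + 1) = 0 := by linear_combination hx
  rcases mul_eq_zero.mp this with h1 | h1
  · exact sub_eq_zero.mp h1
  · exfalso; apply h3
    have := congrArg φ h1
    simp only [map_add, map_pow, map_one, map_zero, h] at this
    linear_combination this

end hom

lemma exists_hom (k : Type) [Field k] [IsAlgClosed k] : Nonempty (E →+* k) := by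
  obtain ⟨z, hz⟩ := IsAlgClosed.exists_root (Polynomial.X ^ 2 + Polynomial.X + 1 : Polynomial k) (by
    have : (Polynomial.X ^ 2 + Polynomial.X + 1 : Polynomial k).degree = 2 := by compute_degree!
    rw [this]; norm_num)
  have hz' : z ^ 2 + z + 1 = 0 := by simpa using hz
  exact ⟨(QuadraticAlgebra.lift (A := k) (R := ℤ) (a := -1) (b := -1)
    ⟨z, by simp; linear_combination hz'⟩).toRingHom⟩

def Recip (A : E) : Prop :=
  ∃ F : ℤ →* E, (∀ m n : ℤ, A ∣ ((m - n : ℤ) : E) → F m = F n) ∧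
    (∀ n : ℤ, IsCoprime n A.norm → F n ^ 3 = 1) ∧
    ∀ q : ℕ, q.Prime → q ≠ 3 → ¬ ((q : ℤ) ∣ A.norm) →
      ∀ (k : Type) [Field k] [IsAlgClosed k] [CharP k q] (φ : E →+* k),
        φ (star A) ^ ((q + 1) / 3) = φ A ^ ((q + 1) / 3) * φ (F q) ^ (2 * q)

lemma Recip.mul {A B : E} (hA : Recip A) (hB : Recip B) : Recip (A * B) := by
  obtain ⟨F, h1, h2, h3⟩ := hA
  obtain ⟨G, g1, g2, g3⟩ := hB
  refine ⟨F * G, ?_, ?_, ?_⟩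
  · intro m n h
    simp only [MonoidHom.mul_apply]
    rw [h1 m n (dvd_of_mul_right_dvd h), g1 m n (dvd_of_mul_left_dvd h)]
  · intro n h
    rw [map_mul] at h
    simp only [MonoidHom.mul_apply]
    rw [mul_pow, h2 n (h.of_mul_right_left), g2 n (h.of_mul_right_right), one_mul]
  · intro q hq hq3 hd k _ _ _ φ
    rw [map_mul] at hd
    have e1 := h3 q hq hq3 (fun h => hd (h.mul_right _)) k φ
    have e2 := g3 q hq hq3 (fun h => hd (h.mul_left _)) k φ
    simp only [MonoidHom.mul_apply, star_mul, map_mul, mul_pow]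
    rw [e1, e2]; ring

lemma Recip.star {A : E} (hA : Recip A) : Recip (star A) := by
  obtain ⟨F, h1, h2, h3⟩ := hA
  refine ⟨F ^ 2, ?_, ?_, ?_⟩
  · intro m n h
    simp only [MonoidHom.pow_apply]
    rw [h1 m n]
    obtain ⟨c, hc⟩ := h
    refine ⟨Star.star c, ?_⟩
    have := congrArg Star.star hc
    rw [star_mul, star_star] at this
    rw [mul_comm, ← this]
    simp
  · intro n h
    rw [QuadraticAlgebra.norm_star] at h
    simp only [MonoidHom.pow_apply]
    rw [← pow_mul, mul_comm 2 3, pow_mul, h2 n h, one_pow]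
  · intro q hq hq3 hd k _ _ _ φ
    rw [QuadraticAlgebra.norm_star] at hd
    have e1 := h3 q hq hq3 hd k φ
    have e2 : F q ^ 3 = 1 := h2 q ((Nat.prime_iff_prime_int.mp hq).coprime_iff_not_dvd.mpr hd)
    have e3 : φ (F q) ^ 3 = 1 := by rw [← map_pow, e2, map_one]
    rw [star_star, e1]
    simp only [MonoidHom.pow_apply, map_pow]
    rw [mul_assoc, ← pow_mul, ← pow_add, show 2 * q + 2 * (2 * q) = 3 * (2 * q) by ring,
      pow_mul, e3]
    simp

lemma Recip.int {n : ℤ} : Recip (n : E) :=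
  ⟨1, fun _ _ _ => rfl, fun _ _ => by simp, fun q _ _ _ k _ _ _ φ => by simp⟩

end Cord
namespace Cord

lemma phi_inj {k : Type} [Field k] [CharZero k] (φ : E →+* k) {x y : E} (h : φ x = φ y) : x = y := by
  rw [← sub_eq_zero]
  apply norm_eq_zero'
  have := phi_norm φ (x - y)
  rw [map_sub, h, sub_self, zero_mul] at this
  exact_mod_cast this.symm

lemma exists_J (p : ℕ) [Fact p.Prime] (hp : p % 3 = 1) :
    ∃ χ : MulChar (ZMod p) E, χ ≠ 1 ∧ χ ^ 3 = 1 ∧ (jacobiSum χ χ).norm = p ∧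
      (3 : ℤ) ∣ (jacobiSum χ χ).im := by
  have hp1 : 3 ∣ Fintype.card (ZMod p) - 1 := by rw [ZMod.card]; omega
  obtain ⟨χ, hχ⟩ := MulChar.exists_mulChar_orderOf (ZMod p) hp1 om_prim
  have h3 : χ ^ 3 = 1 := by rw [← hχ]; exact pow_orderOf_eq_one χ
  have hne : χ ≠ 1 := by
    intro h; rw [h, orderOf_one] at hχ; omega
  have hne2 : χ * χ ≠ 1 := by
    intro h; apply hne
    calc χ = χ ^ 3 * (χ * χ)⁻¹ := by group
      _ = 1 := by rw [h, h3]; simp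
  refine ⟨χ, hne, h3, ?_, ?_⟩
  · obtain ⟨φ⟩ := exists_hom ℂ
    have inj : Function.Injective φ := fun x y h => phi_inj φ h
    have key := jacobiSum_mul_jacobiSum_inv (F := ZMod p) (F' := ℂ) (χ := χ.ringHomComp φ)
      (φ := χ.ringHomComp φ) (by
        rw [ringChar.eq_zero, ZMod.ringChar_zmod_n]; exact (Fact.out : p.Prime).ne_zero.symm)
      ((MulChar.ringHomComp_ne_one_iff inj).mpr hne) ((MulChar.ringHomComp_ne_one_iff inj).mpr hne)
      (by rw [← MulChar.ringHomComp_mul]; exact (MulChar.ringHomComp_ne_one_iff inj).mpr hne2)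
    have hst : χ⁻¹ = χ.ringHomComp (starRingEnd E) := by
      rw [eq_comm, eq_inv_iff_mul_eq_one]
      refine MulChar.ext fun a => ?_
      have ha : χ a ^ 3 = 1 := by
        rw [← MulChar.pow_apply_coe, h3, MulChar.one_apply_coe]
      have hn : (χ a).norm = 1 := by
        have : (χ a).norm ^ 3 = 1 := by rw [← map_pow, ha, map_one]
        exact (pow_eq_one_iff_of_nonneg (norm_nonneg' _) (by norm_num)).mp this
      have := norm_mul_star (χ a)
      rw [hn] at this
      rw [MulChar.mul_apply, MulChar.ringHomComp_apply, MulChar.one_apply_coe, starRingEnd_apply,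
        mul_comm, ← this]
      simp
    rw [MulChar.ringHomComp_inv, hst, jacobiSum_ringHomComp, jacobiSum_ringHomComp,
      jacobiSum_ringHomComp, starRingEnd_apply, phi_norm, ZMod.card] at key
    exact_mod_cast key
  · obtain ⟨z, -, hz⟩ := exists_jacobiSum_eq_neg_one_add (by norm_num) h3 h3 hp1 om_prim
    rw [hz, show (om - 1) ^ 2 = ((-3 : ℤ) : E) * om by
      push_cast; linear_combination om_sq, mul_left_comm]
    have : ∀ y : E, (-1 + ((-3 : ℤ) : E) * y).im = -3 * y.im := fun y => by
      rw [QuadraticAlgebra.im_add, QuadraticAlgebra.im_mul, QuadraticAlgebra.re_intCast,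
        QuadraticAlgebra.im_intCast, QuadraticAlgebra.im_neg, QuadraticAlgebra.im_one]
      simp
    rw [this]
    exact Dvd.intro (-(z * om).im) (by ring)

lemma recip_J (p : ℕ) [Fact p.Prime] (χ : MulChar (ZMod p) E) (hne : χ ≠ 1)
    (h3 : χ ^ 3 = 1) (hN : (jacobiSum χ χ).norm = p) : Recip (jacobiSum χ χ) := by
  set J := jacobiSum χ χ with hJ
  have hch3 : ∀ a : (ZMod p)ˣ, χ a ^ 3 = 1 := fun a => by
    rw [← MulChar.pow_apply_coe, h3, MulChar.one_apply_coe]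
  refine ⟨χ.toMonoidHom.comp (Int.castRingHom (ZMod p)).toMonoidHom, ?_, ?_, ?_⟩
  · rintro m n ⟨c, hc⟩
    have := congrArg QuadraticAlgebra.norm hc
    rw [map_mul, hN, QuadraticAlgebra.norm_intCast] at this
    have hd : (p : ℤ) ∣ m - n :=
      Int.Prime.dvd_pow' (n := m - n) (k := 2) Fact.out ⟨_, this⟩
    have : (m : ZMod p) = n := by
      rw [← sub_eq_zero, ← Int.cast_sub]; exact (ZMod.intCast_zmod_eq_zero_iff_dvd _ _).mpr hd
    simp [this]
  · intro n hn
    rw [hN] at hn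
    have hu : IsUnit (n : ZMod p) := by
      rw [isUnit_iff_ne_zero, Ne, ZMod.intCast_zmod_eq_zero_iff_dvd]
      exact (Nat.prime_iff_prime_int.mp Fact.out).coprime_iff_not_dvd.mp hn.symm
    exact hch3 hu.unit
  · intro q hq hq3 hd k _ _ _ φ
    have : Fact q.Prime := ⟨hq⟩
    have hpq : (p : k) ≠ 0 := by
      rw [Ne, CharP.cast_eq_zero_iff k q]
      rw [hN] at hd; exact_mod_cast hd
    have h3k : (3 : k) ≠ 0 := by
      intro h
      have : ((3 : ℕ) : k) = 0 := by exact_mod_cast h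
      rw [CharP.cast_eq_zero_iff k q, Nat.prime_dvd_prime_iff_eq hq Nat.prime_three] at this
      exact hq3 this
    have hqu : IsUnit (q : ZMod p) := by
      rw [isUnit_iff_ne_zero, Ne, ZMod.natCast_eq_zero_iff]
      intro h
      rw [Nat.prime_dvd_prime_iff_eq Fact.out hq] at h
      rw [hN, h] at hd; exact hd dvd_rfl
    have : NeZero (p : k) := ⟨hpq⟩
    obtain ⟨ζ, hζ⟩ := HasEnoughRootsOfUnity.exists_primitiveRoot k p
    let ψ : AddChar (ZMod p) k := AddChar.zmodChar p hζ.pow_eq_one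
    have hψ : ψ.IsPrimitive := AddChar.zmodChar_primitive_of_primitive_root p hζ
    set X := χ.ringHomComp φ with hX
    have hX3 : X ^ 3 = 1 := by rw [hX, MulChar.ringHomComp_pow, h3, MulChar.ringHomComp_one]
    have hXne : X ≠ 1 := by
      intro h; apply hne
      refine MulChar.ext fun a => ?_
      rw [MulChar.one_apply_coe]
      apply eq_one_of_phi φ h3k (hch3 a)
      have := congrArg (fun f => f (a : ZMod p)) h
      simpa [hX] using this
    have hXinv : X ^ 2 = X⁻¹ := by
      rw [eq_inv_iff_mul_eq_one, ← pow_succ, hX3]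
    have hord : orderOf X = 3 := orderOf_eq_prime hX3 hXne
    set g := gaussSum X ψ with hg
    set g2 := gaussSum (X ^ 2) ψ with hg2
    have hXm1 : X (-1) = 1 := by
      have a1 : X (-1) ^ 3 = 1 := by
        have := MulChar.pow_apply_coe X 3 (-1)
        rw [hX3, MulChar.one_apply_coe] at this
        simpa using this.symm
      have a2 : X (-1) ^ 2 = 1 := by rw [← map_pow]; simp
      calc X (-1) = X (-1) * X (-1) ^ 2 := by rw [a2, mul_one]
        _ = X (-1) ^ 3 := by ring
        _ = 1 := a1
    have hgg : g * g2 = p := by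
      have := gaussSum_mul_gaussSum_pow_orderOf_sub_one hXne hψ
      rw [hord, hXm1, ZMod.card, one_mul] at this
      exact this
    have hJk : jacobiSum X X = φ J := by rw [hX, jacobiSum_ringHomComp]
    have hg3 : g ^ 3 = p * φ J := by
      have := gaussSum_pow_eq_prod_jacobiSum (χ := X) (by omega) hψ
      rw [hord, hXm1, ZMod.card, one_mul] at this
      rw [this, ← hJk]; simp
    have hg0 : g ≠ 0 := by
      intro h; rw [h, zero_mul] at hgg; exact hpq hgg.symm
    have hfrob : g ^ q = gaussSum (X ^ q) (ψ.mulShift hqu.unit) := by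
      rw [hg, gaussSum_frob, AddChar.pow_mulShift]; rfl
    have hsh := gaussSum_mulShift (X ^ q) ψ hqu.unit
    rw [← hfrob, MulChar.pow_apply_coe] at hsh
    have hFq : (χ.toMonoidHom.comp (Int.castRingHom (ZMod p)).toMonoidHom) (q : ℤ) = χ q := by
      simp
    rw [hFq]
    have hXq : X (hqu.unit : ZMod p) = φ (χ q) := by rw [hX]; simp
    rw [hXq] at hsh
    set c := φ (χ q) with hc
    have hc3 : c ^ 3 = 1 := by
      rw [hc, ← map_pow]
      have := hch3 hqu.unit
      rw [IsUnit.unit_spec] at this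
      rw [this, map_one]
    have hpn : φ J * φ (star J) = p := by rw [phi_norm, hN]; simp
    have hJ0 : φ J ≠ 0 := by intro h; rw [h, zero_mul] at hpn; exact hpq hpn.symm
    have hcases : q % 3 = 1 ∨ q % 3 = 2 := by
      have : ¬ 3 ∣ q := fun h => hq3 ((Nat.prime_dvd_prime_iff_eq Nat.prime_three hq).mp h).symm
      omega
    rcases hcases with h | h
    · obtain ⟨M, hM⟩ : ∃ M, q = 3 * M + 1 := ⟨q / 3, by omega⟩
      have hMe : (q + 1) / 3 = M := by omega
      rw [hMe]
      have hXX : X ^ q = X := by rw [hM, pow_succ, pow_mul, hX3, one_pow, one_mul]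
      have hcc : c ^ q = c := by rw [hM, pow_succ, pow_mul, hc3, one_pow, one_mul]
      have hc2 : c ^ (2 * q) = c ^ 2 := by rw [mul_comm, pow_mul, hcc]
      rw [hXX, hcc, ← hg] at hsh
      have f1 := phi_frob1 φ q h J
      have f2 : (φ J ^ M) ^ 3 = 1 := by
        apply mul_right_cancel₀ hJ0
        rw [one_mul, ← pow_mul, ← pow_succ, mul_comm M 3, ← hM, f1]
      have f3 : c * (p * φ J) ^ M = 1 := by
        apply mul_right_cancel₀ hg0
        rw [one_mul, ← hg3, ← pow_mul, mul_assoc, ← pow_succ, ← hM, hsh]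
      rw [← hpn, mul_pow, mul_pow] at f3
      rw [hc2]
      linear_combination (-(φ (star J) ^ M)) * f2 + φ J ^ M * c ^ 2 * f3 - φ J ^ M * (φ J ^ M) ^2 * φ (star J) ^ M * hc3
    · obtain ⟨N, hM⟩ : ∃ N, q = 3 * N + 2 := ⟨q / 3, by omega⟩
      obtain ⟨M, rfl⟩ : ∃ M, M = N + 1 := ⟨_, rfl⟩
      have hMe : (q + 1) / 3 = N + 1 := by omega
      rw [hMe]
      have hXX : X ^ q = X ^ 2 := by rw [hM, pow_add, pow_mul, hX3, one_pow, one_mul]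
      have hcc : c ^ q = c ^ 2 := by rw [hM, pow_add, pow_mul, hc3, one_pow, one_mul]
      have hc2 : c ^ (2 * q) = c := by
        rw [mul_comm, pow_mul, hcc]; linear_combination c * hc3
      rw [hXX, hcc, ← hg2] at hsh
      have f1 := phi_frob2 φ q h J
      have f2 : (φ J ^ (N + 1)) ^ 3 = p := by
        rw [← hpn, ← f1, ← pow_mul, show (N + 1) * 3 = q + 1 by omega]; ring
      have f3 : c ^ 2 * (p * φ J) ^ (N + 1) = p := by
        rw [← hg3, ← pow_mul, show 3 * (N + 1) = q + 1 by omega, ← hgg, ← hsh]; ring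
      have f4 : c ^ 2 * ((φ J ^ (N + 1)) ^ 2 * φ (star J) ^ (N + 1)) = p := by
        rw [← f3, ← hpn]; ring
      rw [hc2]
      apply mul_left_cancel₀ hpq
      linear_combination (-(φ (star J) ^ (N + 1))) * f2 + φ J ^ (N + 1) * c * f4 - φ J ^ (N + 1) * (φ J ^ (N + 1)) ^2 * φ (star J) ^ (N + 1) * hc3

end Cord
namespace Cord

lemma prim_div {A B c : E} (h : A = B * c) (hB : (3 : ℤ) ∣ B.im) (hA : (3 : ℤ) ∣ A.im)
    (hA' : ¬ (3 : ℤ) ∣ A.re) : (3 : ℤ) ∣ c.im ∧ ¬ (3 : ℤ) ∣ c.re := by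
  have h1 : A.re = B.re * c.re - B.im * c.im := by rw [h]; simp; ring
  have h2 : A.im = B.re * c.im + B.im * c.re - B.im * c.im := by rw [h]; simp; ring
  have hBr : ¬ (3 : ℤ) ∣ B.re := fun h => hA' (by
    rw [h1]; exact dvd_sub (h.mul_right _) (hB.mul_right _))
  constructor
  · have : (3 : ℤ) ∣ B.re * c.im := by
      have e : B.re * c.im = A.im - B.im * (c.re - c.im) := by rw [h2]; ring
      rw [e]; exact dvd_sub hA (hB.mul_right _)
    exact (Int.prime_three.dvd_or_dvd this).resolve_left hBr
  · intro h; exact hA' (by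
      rw [h1]; exact dvd_sub (h.mul_left _) (hB.mul_right _))

lemma int_dvd {n : ℤ} {x : E} (h1 : n ∣ x.re) (h2 : n ∣ x.im) : (n : E) ∣ x := by
  obtain ⟨a, ha⟩ := h1
  obtain ⟨b, hb⟩ := h2
  exact ⟨⟨a, b⟩, by ext <;> simp [ha, hb]⟩

lemma inert (p : ℕ) [Fact p.Prime] (hp : p % 3 = 2) (A : E) (h : (p : ℤ) ∣ A.norm) :
    ((p : ℤ) : E) ∣ A := by
  have h0 : ((A.norm : ℤ) : ZMod p) = 0 := (ZMod.intCast_zmod_eq_zero_iff_dvd _ _).mpr h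
  rw [norm_eq] at h0
  push_cast at h0
  have cube : ∀ x : ZMod p, x = (x ^ 3) ^ (2 * (p / 3) + 1) := fun x => by
    have e : 3 * (2 * (p / 3) + 1) + 1 = p + p := by omega
    by_cases hx : x = 0
    · simp [hx]
    · apply mul_right_cancel₀ hx
      rw [← pow_mul, ← pow_succ, e, pow_add, ZMod.pow_card]
  have h1 : (A.re : ZMod p) = -A.im := by
    rw [cube (A.re : ZMod p), cube (-A.im : ZMod p)]
    congr 1
    linear_combination (A.re + A.im : ZMod p) * h0
  have h3 : (3 : ZMod p) ≠ 0 := by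
    intro h
    have : ((3 : ℕ) : ZMod p) = 0 := by exact_mod_cast h
    rw [ZMod.natCast_eq_zero_iff, Nat.prime_dvd_prime_iff_eq Fact.out Nat.prime_three] at this
    omega
  have h2 : (A.im : ZMod p) = 0 := by
    rw [h1] at h0
    have : 3 * (A.im : ZMod p) ^ 2 = 0 := by linear_combination h0
    simpa [h3] using this
  rw [h2, neg_zero] at h1
  exact int_dvd ((ZMod.intCast_zmod_eq_zero_iff_dvd _ _).mp h1)
    ((ZMod.intCast_zmod_eq_zero_iff_dvd _ _).mp h2)

lemma split (p : ℕ) (hp : p.Prime) (J A : E) (hJ : J.norm = p) (h : (p : ℤ) ∣ A.norm) :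
    J ∣ A ∨ star J ∣ A := by
  have hpi := Nat.prime_iff_prime_int.mp hp
  have hJ2 := norm_mul_star J
  have hJ0 : J ≠ 0 := by
    rintro rfl; simp at hJ; exact hp.ne_zero (by exact_mod_cast hJ.symm)
  have hJs0 : star J ≠ 0 := by simpa using hJ0
  rw [hJ] at hJ2
  have hJ' := hJ
  rw [norm_eq] at hJ h
  have hl : ¬ (p : ℤ) ∣ J.im := by
    intro hl
    have hr : (p : ℤ) ∣ J.re := by
      apply hpi.dvd_of_dvd_pow (n := 2)
      have e : J.re ^ 2 = p + J.im * (J.re - J.im) := by rw [← hJ]; ring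
      rw [e]; exact dvd_add dvd_rfl (hl.mul_right _)
    obtain ⟨a, ha⟩ := hl
    obtain ⟨b, hb⟩ := hr
    have : (p : ℤ) * (p * (b ^ 2 - b * a + a ^ 2)) = p * 1 := by
      rw [mul_one]; conv_rhs => rw [← hJ, ha, hb]
      ring
    have := mul_left_cancel₀ (by exact_mod_cast hp.ne_zero) this
    exact hpi.not_isUnit (IsUnit.of_mul_eq_one _ this)
  obtain ⟨t, ht⟩ := h
  have key : (p : ℤ) ∣ (A.re * J.im - A.im * J.re) * (A.re * J.im + A.im * J.re - A.im * J.im) :=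
    ⟨t * J.im ^ 2 - A.im ^ 2, by linear_combination J.im ^ 2 * ht - A.im ^ 2 * hJ⟩
  rcases hpi.dvd_or_dvd key with ⟨s, hs⟩ | ⟨s, hs⟩
  · left
    have : ((p : ℤ) : E) ∣ star J * A := by
      apply int_dvd
      · have : (p : ℤ) ∣ J.im * (star J * A).re := by
          refine ⟨A.im + s * J.re - s * J.im, ?_⟩
          simp
          linear_combination A.im * hJ + (J.re - J.im) * hs
        exact (hpi.dvd_or_dvd this).resolve_left hl
      · refine ⟨-s, ?_⟩
        simp
        linear_combination -hs
    obtain ⟨c, hc⟩ := this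
    refine ⟨c, mul_left_cancel₀ hJs0 ?_⟩
    rw [hc, hJ2]; ring
  · right
    have : ((p : ℤ) : E) ∣ J * A := by
      apply int_dvd
      · have : (p : ℤ) ∣ J.im * (J * A).re := by
          refine ⟨-A.im + s * J.re, ?_⟩
          simp
          linear_combination -A.im * hJ + J.re * hs
        exact (hpi.dvd_or_dvd this).resolve_left hl
      · refine ⟨s, ?_⟩
        simp
        linear_combination hs
    obtain ⟨c, hc⟩ := this
    refine ⟨c, mul_left_cancel₀ hJ0 ?_⟩
    rw [hc, hJ2]; ring

theorem recip_of_primary : ∀ (n : ℕ) (A : E), A.norm = n → (3 : ℤ) ∣ A.im → ¬ (3 : ℤ) ∣ A.re →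
    Recip A := by
  intro n
  induction n using Nat.strong_induction_on with
  | _ n ih =>
  intro A hn h1 h2
  have hn0 : n ≠ 0 := by
    rintro rfl
    rw [norm_eq_zero' hn] at h2; simp at h2
  by_cases hn1 : n = 1
  · subst hn1
    rw [norm_eq] at hn
    obtain ⟨b, hb⟩ := h1
    have hb0 : b = 0 := by
      by_contra hb0
      have : 1 ≤ b ^ 2 := by have := sq_pos_of_ne_zero hb0; omega
      rw [hb] at hn
      push_cast at hn
      nlinarith [sq_nonneg (2 * A.re - 3 * b)]
    have : A = (A.re : E) := by ext <;> simp [hb, hb0]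
    rw [this]; exact Recip.int
  · obtain ⟨p, hp, hpn⟩ := Nat.exists_prime_and_dvd hn1
    have : Fact p.Prime := ⟨hp⟩
    have hpA : (p : ℤ) ∣ A.norm := by rw [hn]; exact_mod_cast hpn
    have step : ∀ B : E, Recip B → (3 : ℤ) ∣ B.im → 1 < B.norm → B ∣ A → Recip A := by
      rintro B hB hB3 hBn ⟨c, hc⟩
      obtain ⟨h3, h4⟩ := prim_div hc hB3 h1 h2
      rw [hc]
      refine hB.mul (ih c.norm.toNat ?_ c ?_ h3 h4)
      · have e : (n : ℤ) = B.norm * c.norm := by rw [← hn, hc, map_mul]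
        have hc0 := norm_nonneg' c
        have : c.norm ≠ 0 := by
          intro h; rw [h, mul_zero] at e; exact hn0 (by exact_mod_cast e)
        have : c.norm < n := by rw [e]; nlinarith [lt_of_le_of_ne hc0 this.symm]
        omega
      · rw [Int.toNat_of_nonneg (norm_nonneg' c)]
    have hp1 : (1 : ℤ) < p := by exact_mod_cast hp.one_lt
    have hp3 : p % 3 ≠ 0 := by
      intro h
      have h3 : (3 : ℤ) ∣ A.norm := dvd_trans (by exact_mod_cast Nat.dvd_of_mod_eq_zero h) hpA
      rw [norm_eq] at h3
      apply h2
      apply Int.prime_three.dvd_of_dvd_pow (n := 2)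
      have : A.re ^ 2 = (A.re ^ 2 - A.re * A.im + A.im ^ 2) + A.im * (A.re - A.im) := by ring
      rw [this]; exact dvd_add h3 (h1.mul_right _)
    have : p % 3 = 1 ∨ p % 3 = 2 := by omega
    rcases this with h | h
    · obtain ⟨χ, c1, c2, c3, c4⟩ := exists_J p h
      have hr := recip_J p χ c1 c2 c3
      rcases split p hp _ A c3 hpA with h | h
      · exact step _ hr c4 (by rw [c3]; exact hp1) h
      · exact step _ hr.star (by simpa using c4)
          (by rw [QuadraticAlgebra.norm_star, c3]; exact hp1) h
    · refine step _ Recip.int (by simp) ?_ (inert p h A hpA)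
      rw [QuadraticAlgebra.norm_intCast]; exact one_lt_pow₀ (by simpa using hp.one_lt) two_ne_zero

end Cord
namespace Cord

lemma three_ne {k : Type} [Field k] {q : ℕ} [CharP k q] (hq : q.Prime) (hq3 : q ≠ 3) : (3 : k) ≠ 0 := by
  intro h
  have : ((3 : ℕ) : k) = 0 := by exact_mod_cast h
  rw [CharP.cast_eq_zero_iff k q, Nat.prime_dvd_prime_iff_eq hq Nat.prime_three] at this
  exact hq3 this

lemma mod3_cases {q : ℕ} (hq : q.Prime) (hq3 : q ≠ 3) : q % 3 = 1 ∨ q % 3 = 2 := by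
  have : ¬ 3 ∣ q := fun h => hq3 ((Nat.prime_dvd_prime_iff_eq Nat.prime_three hq).mp h).symm
  omega

/-- recover `x = 1` from a power -/
lemma one_of_pow {k : Type} [Field k] {q : ℕ} [CharP k q] (hq : q.Prime) (hq3 : q ≠ 3)
    (φ : E →+* k) {x : E} (hx : x ^ 3 = 1) (h : φ x ^ (2 * q) = 1) : x = 1 := by
  apply eq_one_of_phi φ (three_ne hq hq3) hx
  have h3 : φ x ^ 3 = 1 := by rw [← map_pow, hx, map_one]
  rcases mod3_cases hq hq3 with h' | h'
  · obtain ⟨M, hM⟩ : ∃ M, 2 * q = 3 * M + 2 := ⟨2 * q / 3, by omega⟩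
    rw [hM, pow_add, pow_mul, h3, one_pow, one_mul] at h
    linear_combination h3 - φ x * h
  · obtain ⟨M, hM⟩ : ∃ M, 2 * q = 3 * M + 1 := ⟨2 * q / 3, by omega⟩
    rw [hM, pow_add, pow_mul, h3, one_pow, one_mul] at h
    simpa using h

/-- good primes -/
def Good (A : E) (q : ℕ) : Prop :=
  q ≠ 3 ∧ ¬ (q : ℤ) ∣ A.norm ∧ (q : ℤ) ∣ A.im * (2 * A.re - A.im)

theorem main_recip (A : E) (hA1 : (3 : ℤ) ∣ A.im) (hA2 : ¬ (3 : ℤ) ∣ A.re)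
    (p : ℕ) (hp : p.Prime) (hp3 : p ≠ 3) (hpN : ¬ (p : ℤ) ∣ A.norm) (m s : ℤ)
    (hs0 : s ≠ 0) (hN : A.norm = 27 * p * m + s ^ 2)
    (hs : ∀ q : ℕ, q.Prime → (q : ℤ) ∣ s → Good A q) :
    ∃ F : ℤ →* E, F m * F p = 1 ∧ (∀ n : ℤ, n ≠ 0 → (∀ q : ℕ, q.Prime → (q : ℤ) ∣ n → Good A q) →
        F n = 1) ∧
      (¬ (2 : ℤ) ∣ A.norm → ¬ (2 : ℤ) ∣ A.im → F 2 ≠ 1) ∧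
      ∀ (k : Type) [Field k] [IsAlgClosed k] [CharP k p] (φ : E →+* k),
        φ (star A) ^ ((p + 1) / 3) = φ A ^ ((p + 1) / 3) ↔ F p = 1 := by
  obtain ⟨F, h1, h2, h3⟩ := recip_of_primary A.norm.toNat A
    (by rw [Int.toNat_of_nonneg (norm_nonneg' A)]) hA1 hA2
  have cop : ∀ q : ℕ, q.Prime → ¬ (q : ℤ) ∣ A.norm → F q ^ 3 = 1 := fun q hq hd =>
    h2 q ((Nat.prime_iff_prime_int.mp hq).coprime_iff_not_dvd.mpr hd)
  have good : ∀ q : ℕ, q.Prime → Good A q → F q = 1 := by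
    rintro q hq ⟨g1, g2, g3⟩
    have : Fact q.Prime := ⟨hq⟩
    obtain ⟨k, _, _, _⟩ : ∃ (k : Type) (_ : Field k) (_ : IsAlgClosed k), CharP k q :=
      ⟨AlgebraicClosure (ZMod q), inferInstance, inferInstance, inferInstance⟩
    obtain ⟨φ⟩ := exists_hom k
    apply one_of_pow hq g1 φ (cop q hq g2)
    have e := h3 q hq g1 g2 k φ
    have hA0 : φ A ≠ 0 := by
      intro h
      have := phi_norm φ A
      rw [h, zero_mul, eq_comm, CharP.intCast_eq_zero_iff k q] at this
      exact g2 this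
    have hsq : φ (star A) ^ ((q + 1) / 3) = φ A ^ ((q + 1) / 3) := by
      have hor : φ (star A) = φ A ∨ φ (star A) = - φ A := by
        rcases (Nat.prime_iff_prime_int.mp hq).dvd_or_dvd g3 with h | h
        · left
          rw [← CharP.intCast_eq_zero_iff k q] at h
          rw [phi_star, phi_eq φ A, h]; ring
        · right
          rw [← CharP.intCast_eq_zero_iff k q] at h
          push_cast at h
          rw [phi_star, phi_eq φ A]; linear_combination h
      rcases hor with h | h
      · rw [h]
      · rw [h]
        by_cases hq2 : q = 2
        · subst hq2
          rw [CharTwo.neg_eq]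
        · apply Even.neg_pow
          have := hq.eq_two_or_odd
          have := mod3_cases hq g1
          rw [Nat.even_iff]; omega
    rw [hsq] at e
    have := mul_left_cancel₀ (pow_ne_zero _ hA0) ((mul_one _).trans e)
    exact this.symm
  have hm1 : F (-1) = 1 := by
    have a1 : F (-1) ^ 3 = 1 := h2 (-1) (isCoprime_one_left.neg_left)
    have a2 : F (-1) ^ 2 = 1 := by rw [← map_pow]; simp
    linear_combination a1 - F (-1) * a2
  have posn : ∀ n : ℕ, n ≠ 0 → (∀ q : ℕ, q.Prime → q ∣ n → Good A q) → F n = 1 := by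
    intro n
    induction n using Nat.recOnMul with
    | zero => intro h; exact absurd rfl h
    | one => intros; simp
    | prime q hq => intro _ h; exact good q hq (h q hq dvd_rfl)
    | mul a b ha hb =>
      intro h0 h
      have := mul_ne_zero_iff.mp h0
      push_cast
      rw [map_mul, ha this.1 fun q hq hd => h q hq (hd.mul_right _),
        hb this.2 fun q hq hd => h q hq (hd.mul_left _), one_mul]
  have intn : ∀ n : ℤ, n ≠ 0 → (∀ q : ℕ, q.Prime → (q : ℤ) ∣ n → Good A q) → F n = 1 := by
    intro n hn h
    have e := posn n.natAbs (by omega) fun q hq hd => h q hq (Int.natCast_dvd.mpr hd)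
    rcases Int.natAbs_eq n with h' | h'
    · rw [h']; exact e
    · have h4 : F n = F (-1 * (n.natAbs : ℤ)) := congrArg F (by omega)
      rw [h4, map_mul, hm1, e, one_mul]
  have h3N : ¬ (3 : ℤ) ∣ A.norm := by
    intro h
    rw [norm_eq] at h
    apply hA2
    apply Int.prime_three.dvd_of_dvd_pow (n := 2)
    have : A.re ^ 2 = (A.re ^ 2 - A.re * A.im + A.im ^ 2) + A.im * (A.re - A.im) := by ring
    rw [this]; exact dvd_add h (hA1.mul_right _)
  refine ⟨F, ?_, intn, ?_, ?_⟩
  · have e1 : F (27 * p * m) = F (-1 * s ^ 2) := by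
      apply h1
      refine ⟨star A, ?_⟩
      rw [← norm_mul_star, hN]; congr 1; ring
    have e3 : F (27 : ℤ) = 1 := by
      rw [show (27 : ℤ) = (3 : ℕ) ^ 3 by norm_num, map_pow]
      exact cop 3 Nat.prime_three h3N
    rw [map_mul, map_mul, map_mul, map_pow, hm1, intn s hs0 hs, e3] at e1
    linear_combination e1
  · intro h2N h2i hF
    have : Fact (Nat.Prime 2) := ⟨Nat.prime_two⟩
    obtain ⟨k, _, _, _⟩ : ∃ (k : Type) (_ : Field k) (_ : IsAlgClosed k), CharP k 2 :=
      ⟨AlgebraicClosure (ZMod 2), inferInstance, inferInstance, inferInstance⟩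
    obtain ⟨φ⟩ := exists_hom k
    have e := h3 2 Nat.prime_two (by norm_num) (by exact_mod_cast h2N) k φ
    have hF' : F (2 : ℕ) = 1 := hF
    rw [hF', phi_star, phi_eq φ A] at e
    norm_num at e
    have hz : (2 : k) = 0 := CharTwo.two_eq_zero
    have : (A.im : k) = 0 := by
      linear_combination (- 1) * e - A.im * φ om * hz
    rw [CharP.intCast_eq_zero_iff k 2] at this
    exact h2i (by exact_mod_cast this)
  · intro k _ _ _ φ
    have e := h3 p hp hp3 hpN k φ
    have hA0 : φ A ≠ 0 := by
      intro h
      have := phi_norm φ A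
      rw [h, zero_mul, eq_comm, CharP.intCast_eq_zero_iff k p] at this
      exact hpN this
    constructor
    · intro h
      rw [h] at e
      exact one_of_pow hp hp3 φ (cop p hp hpN)
        (mul_left_cancel₀ (pow_ne_zero _ hA0) ((mul_one _).trans e)).symm
    · intro h; rw [e, h]; simp

end Cord
namespace Cord

lemma quad_zero {k : Type} [Field k] {a b c x y z : k} (hxy : x ≠ y) (hyz : y ≠ z) (hzx : z ≠ x)
    (h1 : a * x ^ 2 + b * x + c = 0) (h2 : a * y ^ 2 + b * y + c = 0)
    (h3 : a * z ^ 2 + b * z + c = 0) : a = 0 ∧ b = 0 ∧ c = 0 := by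
  have e1 : a * (x + y) + b = 0 := by
    apply mul_left_cancel₀ (sub_ne_zero.mpr hxy); linear_combination h1 - h2
  have e2 : a * (z + y) + b = 0 := by
    apply mul_left_cancel₀ (sub_ne_zero.mpr hyz); linear_combination h2 - h3
  have ha : a = 0 := by
    apply mul_left_cancel₀ (sub_ne_zero.mpr hzx); linear_combination e2 - e1
  subst ha
  have hb : b = 0 := by linear_combination e1
  subst hb
  exact ⟨rfl, rfl, by linear_combination h1⟩

section
variable {C : ℕ → ℤ}

lemma pow_formula (h0 : C 0 = 0) (h1 : C 1 = 0) (h2 : C 2 = 1)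
    (hrec : ∀ n, C (n + 3) = C (n + 2) + C n) {k : Type} [Field k] {α : k}
    (h : α ^ 3 = α ^ 2 + 1) (n : ℕ) :
    α ^ (n + 2) = C (n + 2) * α ^ 2 + C n * α + C (n + 1) := by
  induction n with
  | zero => simp [h0, h1, h2]
  | succ n ih =>
    rw [show n + 1 + 2 = (n + 2) + 1 by ring, pow_succ, ih, show n + 2 + 1 = n + 3 by ring, hrec]
    push_cast
    rw [show n + 1 + 1 = n + 2 by ring]
    linear_combination (C (n + 2) : k) * h

/-- the three shifted roots -/
structure Roots (k : Type) [Field k] (t0 t1 t2 : k) : Prop where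
  e1 : t0 + t1 + t2 = 0
  e2 : t0 * t1 + t1 * t2 + t2 * t0 = -3
  e3 : t0 * t1 * t2 = 29

lemma Roots.mk' {k : Type} [Field k] {w u v : k} (hw : w ^ 2 + w + 1 = 0) (huv : u * v = 1)
    (hu : u ^ 3 + v ^ 3 = 29) : Roots k (u + v) (u * w + v * w ^ 2) (u * w ^ 2 + v * w) := by
  constructor
  · linear_combination (u + v) * hw
  · have : v * u * w + v * u * w ^ 2 = - (v * u) := by linear_combination v * u * hw
    have h3 : w ^ 3 = 1 := by linear_combination (w - 1) * hw
    grind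
  · have h3 : w ^ 3 = 1 := by linear_combination (w - 1) * hw
    grind

lemma Roots.disc {k : Type} [Field k] {t0 t1 t2 : k} (h : Roots k t0 t1 t2) :
    ((t0 - t1) * (t1 - t2) * (t2 - t0)) ^ 2 = -31 * 27 ^ 2 := by
  obtain ⟨e1, e2, e3⟩ := h
  have : t2 = - t0 - t1 := by linear_combination e1
  subst this
  have q1 : t0 ^ 2 + t0 * t1 + t1 ^ 2 = 3 := by linear_combination - e2
  have q2 : t0 * t1 * (t0 + t1) = - 29 := by linear_combination - e3
  have : ((t0 - t1) * (t1 - (-t0 - t1)) * (-t0 - t1 - t0)) ^ 2 =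
    4 * (t0 ^ 2 + t0 * t1 + t1 ^ 2) ^ 3 - 27 * (t0 * t1 * (t0 + t1)) ^ 2 := by ring
  rw [this, q1, q2]; norm_num

lemma Roots.eq0 {k : Type} [Field k] {t0 t1 t2 : k} (h : Roots k t0 t1 t2) :
    t0 ^ 3 = 3 * t0 + 29 := by
  obtain ⟨e1, e2, e3⟩ := h
  linear_combination t0 ^ 2 * e1 - t0 * e2 + e3

lemma Roots.rot {k : Type} [Field k] {t0 t1 t2 : k} (h : Roots k t0 t1 t2) :
    Roots k t1 t2 t0 := by
  obtain ⟨e1, e2, e3⟩ := h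
  exact ⟨by linear_combination e1, by linear_combination e2, by linear_combination e3⟩

lemma prime_ne {k : Type} [Field k] {p q : ℕ} [CharP k p] (hp : p.Prime) (hq : q.Prime) (h : p ≠ q) :
    (q : k) ≠ 0 := by
  intro h'
  rw [CharP.cast_eq_zero_iff k p, Nat.prime_dvd_prime_iff_eq hp hq] at h'
  exact h h'

lemma Roots.distinct {k : Type} [Field k] {p : ℕ} [CharP k p] (hp : p.Prime) (hp3 : p ≠ 3)
    (hp31 : p ≠ 31) {t0 t1 t2 : k} (h : Roots k t0 t1 t2) : t0 ≠ t1 := by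
  rintro rfl
  have := h.disc
  have h31 : (31 : k) ≠ 0 := by exact_mod_cast prime_ne (k := k) hp (by norm_num) hp31
  have h3 : (3 : k) ≠ 0 := three_ne hp hp3
  have h6 : (31 : k) * 3 ^ 6 = 0 := by linear_combination this
  exact mul_ne_zero h31 (pow_ne_zero _ h3) h6

lemma charac (h0 : C 0 = 0) (h1 : C 1 = 0) (h2 : C 2 = 1)
    (hrec : ∀ n, C (n + 3) = C (n + 2) + C n) {k : Type} [Field k] {p : ℕ} [CharP k p]
    (hp : p.Prime) (hp3 : p ≠ 3) (hp29 : p ≠ 29) (hp31 : p ≠ 31) {t0 t1 t2 : k}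
    (h : Roots k t0 t1 t2) :
    (p : ℤ) ∣ C p ↔ t0 ^ p = t0 ∧ t1 ^ p = t1 ∧ t2 ^ p = t2 := by
  have : Fact p.Prime := ⟨hp⟩
  have h3 : (3 : k) ≠ 0 := three_ne hp hp3
  have h29 : (29 : k) ≠ 0 := by exact_mod_cast prime_ne (k := k) hp (by norm_num) hp29
  obtain ⟨n, hn⟩ : ∃ n, p = n + 2 := ⟨p - 2, by have := hp.two_le; omega⟩
  have d01 := h.distinct hp hp3 hp31
  have d12 := h.rot.distinct hp hp3 hp31
  have d20 := h.rot.rot.distinct hp hp3 hp31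
  have key : ∀ t : k, t ^ 3 = 3 * t + 29 →
      1 + t ^ p = 3 * (C p * ((1 + t) / 3) ^ 2 + C n * ((1 + t) / 3) + C (n + 1)) := by
    intro t ht
    have e : ((1 + t) / 3) ^ 3 = ((1 + t) / 3) ^ 2 + 1 := by
      field_simp
      linear_combination ht
    have e' := pow_formula h0 h1 h2 hrec e n
    rw [← hn] at e'
    rw [← e', div_pow, add_pow_char (p := p), one_pow]
    have : (3 : k) ^ p = 3 := by
      have := map_ofNat (frobenius k p) 3
      rwa [frobenius_def] at this
    rw [this]; field_simp
  have k0 := key t0 h.eq0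
  have k1 := key t1 h.rot.eq0
  have k2 := key t2 h.rot.rot.eq0
  have hC : (p : ℤ) ∣ C p ↔ (C p : k) = 0 := (CharP.intCast_eq_zero_iff k p _).symm
  rw [hC]
  constructor
  · intro hc
    rw [hc] at k0 k1 k2
    obtain ⟨b, hb⟩ : ∃ b, b = (C n : k) := ⟨_, rfl⟩
    obtain ⟨c, hcc⟩ : ∃ c, c = b + 3 * (C (n + 1) : k) - 1 := ⟨_, rfl⟩
    rw [← hb] at k0 k1 k2
    have lin : ∀ t : k, 1 + t ^ p = 3 * (0 * ((1 + t) / 3) ^ 2 + b * ((1 + t) / 3) + C (n + 1)) →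
        t ^ p = b * t + c := by
      intro t ht
      rw [hcc]
      have : 1 + t = 3 * ((1 + t) / 3) := by field_simp
      linear_combination ht - b * this
    have l0 := lin _ k0
    have l1 := lin _ k1
    have l2 := lin _ k2
    have quad : ∀ t : k, t ^ 3 = 3 * t + 29 → t ^ p = b * t + c →
        (3 * b ^ 2 * c) * t ^ 2 + (3 * b ^ 3 + 3 * b * c ^ 2 - 3 * b) * t +
        (29 * b ^ 3 + c ^ 3 - 3 * c - 29) = 0 := by
      intro t ht htp
      have f := congrArg (frobenius k p) ht
      rw [map_pow, map_add, map_mul, map_ofNat, map_ofNat, frobenius_def, htp] at f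
      linear_combination f - b ^ 3 * ht
    obtain ⟨q1, q2, q3⟩ := quad_zero d01 d12 d20 (quad _ h.eq0 l0) (quad _ h.rot.eq0 l1)
      (quad _ h.rot.rot.eq0 l2)
    have hb0 : b ≠ 0 := by
      rintro rfl
      apply d01
      apply frobenius_inj k p
      rw [frobenius_def, frobenius_def, l0, l1]; ring
    have hc0 : c = 0 := by
      apply mul_left_cancel₀ (mul_ne_zero h3 (pow_ne_zero 2 hb0)); linear_combination q1
    rw [hc0] at q2 q3 l0 l1 l2
    have b2 : b ^ 2 = 1 := by
      apply mul_left_cancel₀ (mul_ne_zero h3 hb0); linear_combination q2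
    have b3 : b ^ 3 = 1 := by
      apply mul_left_cancel₀ h29; linear_combination q3
    have b1 : b = 1 := by linear_combination b3 - b * b2
    rw [b1] at l0 l1 l2
    exact ⟨by linear_combination l0, by linear_combination l1, by linear_combination l2⟩
  · rintro ⟨l0, l1, l2⟩
    rw [l0] at k0
    rw [l1] at k1
    rw [l2] at k2
    have hx : ∀ s t : k, s ≠ t → (1 + s) / 3 ≠ (1 + t) / 3 := by
      intro s t hst hh
      apply hst
      field_simp at hh
      linear_combination hh
    have hy : ∀ t : k, 1 + t = 3 * (C p * ((1 + t) / 3) ^ 2 + C n * ((1 + t) / 3) + C (n + 1)) →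
        C p * ((1 + t) / 3) ^ 2 + (C n - 1) * ((1 + t) / 3) + C (n + 1) = (0 : k) := by
      intro t ht
      apply mul_left_cancel₀ h3
      have : 1 + t = 3 * ((1 + t) / 3) := by field_simp
      linear_combination (-1) * ht + this
    exact (quad_zero (hx _ _ d01) (hx _ _ d12) (hx _ _ d20) (hy _ k0) (hy _ k1) (hy _ k2)).1

lemma square_of (h0 : C 0 = 0) (h1 : C 1 = 0) (h2 : C 2 = 1)
    (hrec : ∀ n, C (n + 3) = C (n + 2) + C n) {k : Type} [Field k] {p : ℕ} [CharP k p]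
    (hp : p.Prime) (hp2 : p ≠ 2) (hp3 : p ≠ 3) (hp29 : p ≠ 29) (hp31 : p ≠ 31) {t0 t1 t2 : k}
    (h : Roots k t0 t1 t2) (hC : (p : ℤ) ∣ C p) : ∃ z : ℤ, (p : ℤ) ∣ z ^ 2 + 31 := by
  have : Fact p.Prime := ⟨hp⟩
  obtain ⟨l0, l1, l2⟩ := (charac h0 h1 h2 hrec hp hp3 hp29 hp31 h).mp hC
  have hd := h.disc
  obtain ⟨D, hD⟩ : ∃ D, D = (t0 - t1) * (t1 - t2) * (t2 - t0) := ⟨_, rfl⟩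
  have hDp : frobenius k p D = D := by
    rw [hD]; simp only [map_mul, map_sub, frobenius_def, l0, l1, l2]
  rw [← hD] at hd
  have h3 : (3 : k) ≠ 0 := three_ne hp hp3
  have h27 : (27 : k) ≠ 0 := by
    have := pow_ne_zero 3 h3
    norm_num at this; exact this
  have h31 : (31 : k) ≠ 0 := by exact_mod_cast prime_ne (k := k) hp (by norm_num) hp31
  obtain ⟨x, hx⟩ : ∃ x, x = D / 27 := ⟨_, rfl⟩
  have hx2 : x ^ 2 = -31 := by rw [hx, div_pow, hd]; field_simp
  have hxp : x ^ p = x := by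
    rw [← frobenius_def, hx, map_div₀, hDp, map_ofNat]
  have hx0 : x ≠ 0 := by
    rintro rfl
    apply h31; linear_combination hx2
  have hodd : p = 2 * (p / 2) + 1 := by have := hp.eq_two_or_odd; omega
  have e1 : (-31 : k) ^ (p / 2) = 1 := by
    rw [hodd, pow_succ, pow_mul, hx2] at hxp
    exact mul_right_cancel₀ hx0 (hxp.trans (one_mul x).symm)
  have e2 : (((-31) ^ (p / 2) - 1 : ℤ) : k) = 0 := by push_cast; rw [e1, sub_self]
  rw [CharP.intCast_eq_zero_iff k p, ← CharP.intCast_eq_zero_iff (ZMod p) p] at e2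
  push_cast at e2
  have h31' : (-31 : ZMod p) ≠ 0 := by
    have : (31 : ZMod p) ≠ 0 := by exact_mod_cast prime_ne (k := ZMod p) hp (by norm_num) hp31
    simpa using this
  obtain ⟨r, hr⟩ := (ZMod.euler_criterion p h31').mpr (sub_eq_zero.mp e2)
  obtain ⟨z, rfl⟩ := ZMod.intCast_surjective r
  refine ⟨z, ?_⟩
  rw [← CharP.intCast_eq_zero_iff (ZMod p) p]
  push_cast
  linear_combination - hr

lemma cond_eps (h0 : C 0 = 0) (h1 : C 1 = 0) (h2 : C 2 = 1)
    (hrec : ∀ n, C (n + 3) = C (n + 2) + C n) {k : Type} [Field k] [IsAlgClosed k]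
    {p : ℕ} [CharP k p]
    (hp : p.Prime) (hp3 : p ≠ 3) (hp29 : p ≠ 29) (hp31 : p ≠ 31)
    {w e f : k} (hw : w ^ 2 + w + 1 = 0) (hef : e * f = 1) (hsum : e + f = 29)
    (hfrob : (p % 3 = 1 ∧ e ^ p = e) ∨ (p % 3 = 2 ∧ e ^ p = f)) :
    (p : ℤ) ∣ C p ↔ e ^ ((p + 1) / 3) = 1 := by
  have : Fact p.Prime := ⟨hp⟩
  obtain ⟨u, hu⟩ := IsAlgClosed.exists_pow_nat_eq e (n := 3) (by norm_num)
  have he0 : e ≠ 0 := left_ne_zero_of_mul_eq_one hef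
  have hu0 : u ≠ 0 := by rintro rfl; apply he0; rw [← hu]; simp
  obtain ⟨v, hv⟩ : ∃ v, v = u⁻¹ := ⟨_, rfl⟩
  have huv : u * v = 1 := by rw [hv]; exact mul_inv_cancel₀ hu0
  have hv3 : v ^ 3 = f := by
    apply mul_left_cancel₀ he0
    rw [hef, ← hu, ← mul_pow, huv, one_pow]
  have hR := Roots.mk' hw huv (by rw [hu, hv3, hsum])
  rw [charac h0 h1 h2 hrec hp hp3 hp29 hp31 hR]
  have h3 : (3 : k) ≠ 0 := three_ne hp hp3
  have h31 : (31 : k) ≠ 0 := by exact_mod_cast prime_ne (k := k) hp (by norm_num) hp31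
  have hne : e ≠ f := by
    rintro rfl
    have : (31 : k) * 3 ^ 3 = 0 := by linear_combination (- e * 2 - 29) * hsum + 4 * hef
    exact mul_ne_zero h31 (pow_ne_zero _ h3) this
  have hw3 : w ^ 3 = 1 := by linear_combination (w - 1) * hw
  have hvp : v ^ p * u ^ p = 1 := by rw [← mul_pow, mul_comm, huv, one_pow]
  have fr : ∀ x y : k, (x + y) ^ p = x ^ p + y ^ p := fun x y => add_pow_char x y p
  rcases hfrob with ⟨hm, hf⟩ | ⟨hm, hf⟩
  · obtain ⟨M, hM⟩ : ∃ M, p = 3 * M + 1 := ⟨p / 3, by omega⟩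
    have hM' : (p + 1) / 3 = M := by omega
    have hup : u ^ p = e ^ M * u := by rw [hM, pow_succ, pow_mul, hu]
    have hwp : w ^ p = w := by rw [hM, pow_succ, pow_mul, hw3, one_pow, one_mul]
    rw [hM']
    constructor
    · rintro ⟨l0, -, -⟩
      rw [fr] at l0
      have : (u ^ p - u) * (u ^ p - v) = 0 := by
        linear_combination u ^ p * l0 + huv - hvp
      rcases mul_eq_zero.mp this with h | h
      · apply mul_right_cancel₀ hu0; linear_combination h - hup
      · exfalso; apply hne
        have h' : u ^ p = v := by linear_combination h
        rw [← hf, ← hv3, ← h', ← hu]; ring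
    · intro hE
      rw [hE, one_mul] at hup
      have hvp' : v ^ p = v := by
        rw [hup] at hvp
        apply mul_right_cancel₀ hu0; rw [hvp, mul_comm, huv]
      simp only [fr, mul_pow, hup, hvp', hwp, ← pow_mul, mul_comm 2 p]
      simp only [pow_mul, hwp, and_self]
  · obtain ⟨M, hM⟩ : ∃ M, p + 1 = 3 * M := ⟨(p + 1) / 3, by omega⟩
    have hM' : (p + 1) / 3 = M := by omega
    have hup : u ^ p * u = e ^ M := by rw [← pow_succ, hM, pow_mul, hu]
    have hwp : w ^ p = w ^ 2 := by
      obtain ⟨N, hN⟩ : ∃ N, p = 3 * N + 2 := ⟨p / 3, by omega⟩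
      rw [hN, pow_add, pow_mul, hw3, one_pow, one_mul]
    rw [hM']
    constructor
    · rintro ⟨l0, -, -⟩
      rw [fr] at l0
      have : (u ^ p - u) * (u ^ p - v) = 0 := by
        linear_combination u ^ p * l0 + huv - hvp
      rcases mul_eq_zero.mp this with h | h
      · exfalso; apply hne
        have h' : u ^ p = u := by linear_combination h
        rw [← hf, ← hu]
        nth_rewrite 1 [← h']
        ring
      · linear_combination u * h - hup + huv
    · intro hE
      rw [hE] at hup
      have hup' : u ^ p = v := by
        apply mul_right_cancel₀ hu0; rw [hup, mul_comm, huv]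
      have hvp' : v ^ p = u := by
        rw [hup'] at hvp
        apply mul_right_cancel₀ (right_ne_zero_of_mul_eq_one huv); rw [hvp, huv]
      have w4 : (w ^ 2) ^ 2 = w := by linear_combination w * hw3
      simp only [fr, mul_pow, hup', hvp', hwp, ← pow_mul w 2 p, mul_comm 2 p]
      simp only [pow_mul, hwp, w4]
      exact ⟨by ring, by ring, by ring⟩

theorem link (h0 : C 0 = 0) (h1 : C 1 = 0) (h2 : C 2 = 1)
    (hrec : ∀ n, C (n + 3) = C (n + 2) + C n) {k : Type} [Field k] [IsAlgClosed k]
    {p : ℕ} [CharP k p]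
    (hp : p.Prime) (hp3 : p ≠ 3) (hp29 : p ≠ 29) (hp31 : p ≠ 31)
    (φ : E →+* k) (A : E) (m s : ℤ) (hN : A.norm = 27 * p * m + s ^ 2) (hps : ¬ (p : ℤ) ∣ s)
    (hT : 2 * A.re - A.im = 29 * s) :
    (p : ℤ) ∣ C p ↔ φ (star A) ^ ((p + 1) / 3) = φ A ^ ((p + 1) / 3) := by
  have : Fact p.Prime := ⟨hp⟩
  have hs0 : (s : k) ≠ 0 := by rwa [Ne, CharP.intCast_eq_zero_iff k p]
  have n1 : φ A * φ (star A) = s ^ 2 := by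
    rw [phi_norm, hN]; push_cast; rw [CharP.cast_eq_zero k p]; ring
  have t1 : φ A + φ (star A) = 29 * s := by
    rw [phi_star, phi_eq φ A]
    have := congrArg (Int.cast : ℤ → k) hT
    push_cast at this
    linear_combination this
  obtain ⟨e, he⟩ : ∃ e, e = φ A / s := ⟨_, rfl⟩
  obtain ⟨f, hf⟩ : ∃ f, f = φ (star A) / s := ⟨_, rfl⟩
  have he' : φ A = e * s := by rw [he]; field_simp
  have hf' : φ (star A) = f * s := by rw [hf]; field_simp
  have hef : e * f = 1 := by
    apply mul_right_cancel₀ (pow_ne_zero 2 hs0); rw [he', hf'] at n1; linear_combination n1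
  have hsum : e + f = 29 := by
    apply mul_right_cancel₀ hs0; rw [he', hf'] at t1; linear_combination t1
  have hsp : (s : k) ^ p = s := by
    rw [← frobenius_def, map_intCast]
  have hfrob : (p % 3 = 1 ∧ e ^ p = e) ∨ (p % 3 = 2 ∧ e ^ p = f) := by
    rcases mod3_cases hp hp3 with h | h
    · left; refine ⟨h, ?_⟩
      rw [he, div_pow, hsp, phi_frob1 φ p h]
    · right; refine ⟨h, ?_⟩
      rw [he, hf, div_pow, hsp, phi_frob2 φ p h]
  rw [cond_eps h0 h1 h2 hrec hp hp3 hp29 hp31 (phi_om φ) hef hsum hfrob]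
  rw [he', hf', mul_pow, mul_pow, mul_left_inj' (pow_ne_zero _ hs0)]
  set M := (p + 1) / 3
  have hefM : e ^ M * f ^ M = 1 := by rw [← mul_pow, hef, one_pow]
  have h3M : e ^ M * e ^ M * e ^ M = 1 := by
    rw [← pow_add, ← pow_add]
    have he0 : e ≠ 0 := left_ne_zero_of_mul_eq_one hef
    rcases hfrob with ⟨h, h'⟩ | ⟨h, h'⟩
    · have : p = M + M + M + 1 := by omega
      rw [this, pow_succ] at h'
      exact mul_right_cancel₀ he0 (h'.trans (one_mul e).symm)
    · have : M + M + M = p + 1 := by omega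
      rw [this, pow_succ, h', mul_comm, hef]
  constructor
  · intro h; rw [h, one_mul] at hefM; rw [h, hefM]
  · intro h; rw [h] at hefM; rwa [hefM, one_mul] at h3M
end
end Cord
namespace Cord

lemma reduce : ∀ n : ℕ, ∀ a b c : ℤ, 0 < a → a ≤ n → b ^ 2 + 31 = 4 * a * c →
    ∃ α β γ δ : ℤ,
      (∀ x y : ℤ, a * x ^ 2 + b * x * y + c * y ^ 2 =
        (α * x + β * y) ^ 2 + (α * x + β * y) * (γ * x + δ * y) + 8 * (γ * x + δ * y) ^ 2) ∨
      (∀ x y : ℤ, a * x ^ 2 + b * x * y + c * y ^ 2 =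
        2 * (α * x + β * y) ^ 2 + (α * x + β * y) * (γ * x + δ * y) + 4 * (γ * x + δ * y) ^ 2) := by
  intro n
  induction n with
  | zero => intro a b c h1 h2; exfalso; push_cast at h2; omega
  | succ n ih =>
    intro a b c ha han h
    obtain ⟨j, b', hb', hlo, hhi⟩ : ∃ j b' : ℤ, b' = b + 2 * j * a ∧ -a ≤ b' ∧ b' ≤ a := by
      refine ⟨-((b + a) / (2 * a)), (b + a) % (2 * a) - a, ?_, ?_, ?_⟩
      · have := Int.emod_add_mul_ediv (b + a) (2 * a)
        linear_combination this
      · have := Int.emod_nonneg (b + a) (b := 2 * a) (by omega)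
        omega
      · have := Int.emod_lt_of_pos (b + a) (b := 2 * a) (by omega)
        omega
    obtain ⟨c', hc'⟩ : ∃ c', c' = c + j * b + j ^ 2 * a := ⟨_, rfl⟩
    have h' : b' ^ 2 + 31 = 4 * a * c' := by rw [hb', hc']; linear_combination h
    have hc0 : 0 < c' := by nlinarith [sq_nonneg b']
    have htr : ∀ x y : ℤ, a * x ^ 2 + b * x * y + c * y ^ 2 =
        a * (x - j * y) ^ 2 + b' * (x - j * y) * y + c' * y ^ 2 := by
      intro x y; rw [hb', hc']; ring
    by_cases hlt : c' < a
    · obtain ⟨α, β, γ, δ, H⟩ := ih c' b' a hc0 (by push_cast at han; omega) (by linear_combination h')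
      refine ⟨β, α - j * β, δ, γ - j * δ, ?_⟩
      rcases H with H | H
      · left; intro x y
        have := H y (x - j * y)
        rw [htr]; linear_combination this
      · right; intro x y
        have := H y (x - j * y)
        rw [htr]; linear_combination this
    · have hb2 : b' ^ 2 ≤ a ^ 2 := by nlinarith
      have ha3 : a ≤ 3 := by nlinarith
      have fin : (a = 1 ∧ (b' = 1 ∨ b' = -1) ∧ c' = 8) ∨ (a = 2 ∧ (b' = 1 ∨ b' = -1) ∧ c' = 4) := by
        clear htr hc' hb' ih han h
        interval_cases a <;> interval_cases b' <;> omega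
      rcases fin with ⟨h1, h2 | h2, h3⟩ | ⟨h1, h2 | h2, h3⟩
      · refine ⟨1, -j, 0, 1, Or.inl fun x y => ?_⟩
        rw [htr, h1, h2, h3]; ring
      · refine ⟨-1, j, 0, 1, Or.inl fun x y => ?_⟩
        rw [htr, h1, h2, h3]; ring
      · refine ⟨1, -j, 0, 1, Or.inr fun x y => ?_⟩
        rw [htr, h1, h2, h3]; ring
      · refine ⟨-1, j, 0, 1, Or.inr fun x y => ?_⟩
        rw [htr, h1, h2, h3]; ring

lemma repr_of_square {p : ℕ} (hp : p.Prime) (hp2 : p ≠ 2) (z : ℤ) (hz : (p : ℤ) ∣ z ^ 2 + 31) :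
    (∃ X Y : ℤ, (p : ℤ) = X ^ 2 + 31 * Y ^ 2) ∨
    (∃ X Y : ℤ, X % 2 = 1 ∧ Y % 2 = 1 ∧ 8 * (p : ℤ) = X ^ 2 + 31 * Y ^ 2) := by
  have hodd : (p : ℤ) % 2 = 1 := by have := hp.eq_two_or_odd; omega
  have hpos : 0 < (p : ℤ) := by exact_mod_cast hp.pos
  obtain ⟨b, hb2, hb⟩ : ∃ b : ℤ, b % 2 = 1 ∧ (p : ℤ) ∣ b ^ 2 + 31 := by
    rcases Int.emod_two_eq_zero_or_one z with h | h
    · refine ⟨z + p, by omega, ?_⟩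
      have : (z + p) ^ 2 + 31 = (z ^ 2 + 31) + p * (2 * z + p) := by ring
      rw [this]; exact dvd_add hz (dvd_mul_right _ _)
    · exact ⟨z, h, hz⟩
  obtain ⟨c, hc⟩ : ∃ c, b ^ 2 + 31 = 4 * p * c := by
    have h4 : (4 : ℤ) ∣ b ^ 2 + 31 := by
      obtain ⟨t, ht⟩ : ∃ t, b = 2 * t + 1 := ⟨b / 2, by omega⟩
      exact ⟨t ^ 2 + t + 8, by rw [ht]; ring⟩
    have hcop : IsCoprime (4 : ℤ) p := by
      have : IsCoprime (2 : ℤ) p := Int.prime_two.coprime_iff_not_dvd.mpr (by omega)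
      have := this.pow_left (m := 2)
      norm_num at this; exact this
    obtain ⟨c, hc⟩ := hcop.mul_dvd h4 hb
    exact ⟨c, hc⟩
  obtain ⟨α, β, γ, δ, H⟩ := reduce p p b c hpos le_rfl hc
  rcases H with H | H
  · left
    have e := H 1 0
    have e' : (p : ℤ) = α * (α + γ) + 8 * γ ^ 2 := by linear_combination e
    rcases Int.emod_two_eq_zero_or_one γ with h | h
    · obtain ⟨Y, hY⟩ : ∃ Y, γ = 2 * Y := ⟨γ / 2, by omega⟩
      exact ⟨α + Y, Y, by rw [e', hY]; ring⟩
    · exfalso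
      have : (2 : ℤ) ∣ α * (α + γ) := by
        rcases Int.emod_two_eq_zero_or_one α with h' | h'
        · exact Dvd.dvd.mul_right (by omega) _
        · exact Dvd.dvd.mul_left (by omega) _
      omega
  · right
    have e := H 1 0
    have e' : (p : ℤ) = 2 * α ^ 2 + α * γ + 4 * γ ^ 2 := by linear_combination e
    have hγ : γ % 2 = 1 := by
      by_contra h
      obtain ⟨Y, hY⟩ : ∃ Y, γ = 2 * Y := ⟨γ / 2, by omega⟩
      have : (p : ℤ) = 2 * (α ^ 2 + α * Y + 8 * Y ^ 2) := by rw [e', hY]; ring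
      omega
    exact ⟨4 * α + γ, γ, by omega, hγ, by rw [e']; ring⟩

section
variable {C : ℕ → ℤ}

lemma A_norm {A : E} {R S : ℤ} (hre : 2 * A.re = 29 * S + 3 * R) (him : A.im = 3 * R) :
    4 * A.norm = 841 * S ^ 2 + 27 * R ^ 2 := by
  rw [norm_eq, him]
  linear_combination (2 * A.re + 29 * S - 3 * R) * hre

theorem common (h0 : C 0 = 0) (h1 : C 1 = 0) (h2 : C 2 = 1)
    (hrec : ∀ n, C (n + 3) = C (n + 2) + C n)
    {p : ℕ} (hp : p.Prime) (hp3 : p ≠ 3) (hp29 : p ≠ 29) (hp31 : p ≠ 31)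
    (A : E) (R S m : ℤ) (hre : 2 * A.re = 29 * S + 3 * R) (him : A.im = 3 * R)
    (hm : R ^ 2 + 31 * S ^ 2 = 4 * p * m) (h3S : ¬ (3 : ℤ) ∣ S) (hpS : ¬ (p : ℤ) ∣ S)
    (hs : ∀ q : ℕ, q.Prime → (q : ℤ) ∣ S → Good A q) :
    ∃ F : ℤ →* E, F m * F p = 1 ∧ (∀ n : ℤ, n ≠ 0 → (∀ q : ℕ, q.Prime → (q : ℤ) ∣ n → Good A q) →
        F n = 1) ∧
      (¬ (2 : ℤ) ∣ A.norm → ¬ (2 : ℤ) ∣ A.im → F 2 ≠ 1) ∧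
      ((p : ℤ) ∣ C p ↔ F p = 1) := by
  have : Fact p.Prime := ⟨hp⟩
  have hpP := Nat.prime_iff_prime_int.mp hp
  have hN : A.norm = 27 * p * m + S ^ 2 := by
    have := A_norm hre him
    linarith
  have hpN : ¬ (p : ℤ) ∣ A.norm := by
    intro h
    rw [hN] at h
    have h' : (p : ℤ) ∣ S ^ 2 := (dvd_add_right ⟨27 * m, by ring⟩).mp h
    exact hpS (hpP.dvd_of_dvd_pow h')
  obtain ⟨F, f1, f2, f3, f4⟩ := main_recip A (by omega) (by omega) p hp hp3 hpN m S
    (by omega) hN hs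
  refine ⟨F, f1, f2, f3, ?_⟩
  obtain ⟨k, _, _, _⟩ : ∃ (k : Type) (_ : Field k) (_ : IsAlgClosed k), CharP k p :=
      ⟨AlgebraicClosure (ZMod p), inferInstance, inferInstance, inferInstance⟩
  obtain ⟨φ⟩ := exists_hom k
  rw [← f4 k φ]
  exact link h0 h1 h2 hrec hp hp3 hp29 hp31 φ A m S hN hpS (by omega)

lemma q_of_N {A : E} {R S : ℤ} (hre : 2 * A.re = 29 * S + 3 * R) (him : A.im = 3 * R)
    {q : ℕ} (hq : q.Prime) (hq3 : q ≠ 3) (hqS : (q : ℤ) ∣ S) (hqN : (q : ℤ) ∣ A.norm) :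
    (q : ℤ) ∣ R := by
  have hqP := Nat.prime_iff_prime_int.mp hq
  have e := A_norm hre him
  have h : (q : ℤ) ∣ 27 * R ^ 2 := by
    have : 27 * R ^ 2 = 4 * A.norm - S * (841 * S) := by rw [e]; ring
    rw [this]; exact dvd_sub (hqN.mul_left _) (hqS.mul_right _)
  rcases hqP.dvd_or_dvd h with h | h
  · exfalso
    have h27 : q ∣ 3 ^ 3 := by exact_mod_cast h
    exact hq3 ((Nat.prime_dvd_prime_iff_eq hq Nat.prime_three).mp (hq.dvd_of_dvd_pow h27))
  · exact hqP.dvd_of_dvd_pow h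

lemma good31 {A : E} {R S : ℤ} (hre : 2 * A.re = 29 * S + 3 * R) (him : A.im = 3 * R)
    (hR : (31 : ℤ) ∣ R) (hS : ¬ (31 : ℤ) ∣ S) : Good A 31 := by
  refine ⟨by norm_num, ?_, ?_⟩
  · intro h
    have e := A_norm hre him
    have h' : (31 : ℤ) ∣ 841 * S ^ 2 := by
      have : 841 * S ^ 2 = 4 * A.norm - R * (27 * R) := by rw [e]; ring
      rw [this]; exact dvd_sub (Dvd.dvd.mul_left h _) (hR.mul_right _)
    have h31 : Prime (31 : ℤ) := by norm_num
    rcases h31.dvd_or_dvd h' with h | h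
    · omega
    · exact hS (h31.dvd_of_dvd_pow h)
  · rw [him]
    exact Dvd.dvd.mul_right (Dvd.dvd.mul_left (by exact_mod_cast hR) _) _

lemma good_m {A : E} {m : ℤ} (hm : m = 1 ∨ (m = 31 ∧ Good A 31)) :
    m ≠ 0 ∧ ∀ q : ℕ, q.Prime → (q : ℤ) ∣ m → Good A q := by
  rcases hm with rfl | ⟨rfl, h⟩
  · refine ⟨one_ne_zero, fun q hq hd => ?_⟩
    have : q ∣ 1 := by exact_mod_cast hd
    exact absurd (Nat.dvd_one.mp this) hq.one_lt.ne'
  · refine ⟨by norm_num, fun q hq hd => ?_⟩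
    have : q ∣ 31 := by exact_mod_cast hd
    rw [(Nat.prime_dvd_prime_iff_eq hq (by norm_num)).mp this]; exact h

/-- selection of `(r, s)` -/
lemma select {p : ℕ} (hp : p.Prime) (hp3 : p ≠ 3) (hp31 : p ≠ 31) (c X Y : ℤ)
    (hc : c = 1 ∨ (c = 8 ∧ X % 2 = 1)) (hc2 : ¬ (p : ℤ) ∣ 2)
    (h : c * p = X ^ 2 + 31 * Y ^ 2) :
    ∃ r s m : ℤ, r ^ 2 + 31 * s ^ 2 = c * p * m ∧ ¬ (3 : ℤ) ∣ s ∧ (¬ (p : ℤ) ∣ s) ∧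
      (∀ q : ℕ, q.Prime → (q : ℤ) ∣ s → ¬ (q : ℤ) ∣ r) ∧
      (m = 1 ∨ (m = 31 ∧ (31 : ℤ) ∣ r ∧ ¬ (31 : ℤ) ∣ s)) ∧
      ((r % 2 = X % 2 ∧ s % 2 = Y % 2) ∨ (r % 2 = Y % 2 ∧ s % 2 = X % 2)) := by
  have hpP := Nat.prime_iff_prime_int.mp hp
  have h31 : Prime (31 : ℤ) := by norm_num
  have hcq : ∀ q : ℕ, q.Prime → (q : ℤ) ∣ c → q = 2 ∧ X % 2 = 1 := by
    intro q hq hd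
    rcases hc with rfl | ⟨rfl, hX⟩
    · have : q ∣ 1 := by exact_mod_cast hd
      exact absurd (Nat.dvd_one.mp this) hq.one_lt.ne'
    · have : q ∣ 2 ^ 3 := by exact_mod_cast hd
      exact ⟨(Nat.prime_dvd_prime_iff_eq hq Nat.prime_two).mp (hq.dvd_of_dvd_pow this), hX⟩
  have cop : ∀ q : ℕ, q.Prime → (q : ℤ) ∣ X → ¬ (q : ℤ) ∣ Y := by
    intro q hq hX hY
    have hqP := Nat.prime_iff_prime_int.mp hq
    have hqc : ¬ (q : ℤ) ∣ c := by
      intro hd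
      obtain ⟨rfl, h⟩ := hcq q hq hd
      push_cast at hX
      omega
    obtain ⟨x, rfl⟩ := hX
    obtain ⟨y, rfl⟩ := hY
    have hd : (q : ℤ) ∣ c * p := ⟨q * (x ^ 2 + 31 * y ^ 2), by rw [h]; ring⟩
    have hd' := (hqP.dvd_or_dvd hd).resolve_left hqc
    have hqp : q = p := (Nat.prime_dvd_prime_iff_eq hq hp).mp (by exact_mod_cast hd')
    subst hqp
    apply hqc
    refine ⟨x ^ 2 + 31 * y ^ 2, ?_⟩
    apply mul_right_cancel₀ hqP.ne_zero
    rw [h]; ring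
  have x31 : ¬ (31 : ℤ) ∣ X := by
    intro hX
    have hd : (31 : ℤ) ∣ c * p := by
      rw [h, pow_two]; exact dvd_add (hX.mul_right _) (dvd_mul_right _ _)
    rcases h31.dvd_or_dvd hd with hd | hd
    · rcases hc with rfl | ⟨rfl, _⟩ <;> omega
    · have : 31 ∣ p := by exact_mod_cast hd
      exact hp31 ((Nat.prime_dvd_prime_iff_eq (by norm_num) hp).mp this).symm
  have fin : ∀ r s m : ℤ, r ^ 2 + 31 * s ^ 2 = c * p * m →
      (∀ q : ℕ, q.Prime → (q : ℤ) ∣ s → ¬ (q : ℤ) ∣ r) → ¬ (p : ℤ) ∣ s := by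
    intro r s m he hcp hd
    apply hcp p hp hd
    apply hpP.dvd_of_dvd_pow (n := 2)
    have : r ^ 2 = p * (c * m) - s * (31 * s) := by linear_combination he
    rw [this]; exact dvd_sub (dvd_mul_right _ _) (hd.mul_right _)
  by_cases hY3 : (3 : ℤ) ∣ Y
  · have e : (31 * Y) ^ 2 + 31 * X ^ 2 = c * p * 31 := by rw [h]; ring
    have hcp : ∀ q : ℕ, q.Prime → (q : ℤ) ∣ X → ¬ (q : ℤ) ∣ 31 * Y := by
      intro q hq hX hd
      rcases (Nat.prime_iff_prime_int.mp hq).dvd_or_dvd hd with hd | hd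
      · have : q ∣ 31 := by exact_mod_cast hd
        rw [(Nat.prime_dvd_prime_iff_eq hq (by norm_num)).mp this] at hX
        exact x31 hX
      · exact cop q hq hX hd
    refine ⟨31 * Y, X, 31, e, ?_, fin _ _ _ e hcp, hcp, Or.inr ⟨rfl, dvd_mul_right _ _, x31⟩, by omega⟩
    intro hX
    exact cop 3 Nat.prime_three hX hY3
  · have e : X ^ 2 + 31 * Y ^ 2 = c * p * 1 := by rw [h]; ring
    have hcp : ∀ q : ℕ, q.Prime → (q : ℤ) ∣ Y → ¬ (q : ℤ) ∣ X := fun q hq h1 h2 => cop q hq h2 h1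
    exact ⟨X, Y, 1, e, hY3, fin _ _ _ e hcp, hcp, Or.inl rfl, by omega⟩

theorem case_one (h0 : C 0 = 0) (h1 : C 1 = 0) (h2 : C 2 = 1)
    (hrec : ∀ n, C (n + 3) = C (n + 2) + C n)
    {p : ℕ} (hp : p.Prime) (hp2 : p ≠ 2) (hp3 : p ≠ 3) (hp29 : p ≠ 29) (hp31 : p ≠ 31)
    (X Y : ℤ) (h : (p : ℤ) = X ^ 2 + 31 * Y ^ 2) : (p : ℤ) ∣ C p := by
  have hpP := Nat.prime_iff_prime_int.mp hp
  have hodd : (p : ℤ) % 2 = 1 := by have := hp.eq_two_or_odd; omega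
  have hp2' : ¬ (p : ℤ) ∣ 2 := by
    intro hd
    have : p ∣ 2 := by exact_mod_cast hd
    exact hp2 ((Nat.prime_dvd_prime_iff_eq hp Nat.prime_two).mp this)
  obtain ⟨r, s, m, e, s3, ps, cop, hm, par⟩ := select hp hp3 hp31 1 X Y (Or.inl rfl) hp2'
    (by rw [one_mul]; exact h)
  have hpar : (r + s) % 2 = 1 := by
    have hXY : (X + Y) % 2 = 1 := by
      by_contra hcon
      obtain ⟨t, ht⟩ : ∃ t, X = 2 * t - Y := ⟨(X + Y) / 2, by omega⟩
      have : (p : ℤ) = 2 * (2 * t ^ 2 - 2 * t * Y + 16 * Y ^ 2) := by rw [h, ht]; ring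
      omega
    omega
  let A : E := ⟨29 * s + 3 * r, 6 * r⟩
  have hre : 2 * A.re = 29 * (2 * s) + 3 * (2 * r) := by
    change 2 * (29 * s + 3 * r) = _; ring
  have him : A.im = 3 * (2 * r) := by change 6 * r = _; ring
  have hAN := A_norm hre him
  have hN2 : ¬ (2 : ℤ) ∣ A.norm := by
    rintro ⟨t, ht⟩
    rw [ht] at hAN
    obtain ⟨j, hj⟩ : ∃ j, r = 2 * j + 1 - s := ⟨(r + s) / 2, by omega⟩
    rw [hj] at hAN
    have : 2 * (t - 421 * s ^ 2 - 13 * (2 * j + 1 - s) ^ 2 - (2 * j ^ 2 + 2 * j - 2 * j * s - s)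
      - s ^ 2 + s ^ 2) - 1 = 0 := by
      linarith
    omega
  obtain ⟨F, f1, f2, -, f4⟩ := common h0 h1 h2 hrec hp hp3 hp29 hp31 A (2 * r) (2 * s) m hre him
    (by linear_combination 4 * e)
    (fun hd => (Int.prime_three.dvd_or_dvd hd).elim (by norm_num) s3)
    (fun hd => (hpP.dvd_or_dvd hd).elim hp2' ps)
    (by
      intro q hq hd
      by_cases hq2 : q = 2
      · subst hq2
        refine ⟨by norm_num, by exact_mod_cast hN2, ?_⟩
        rw [him]
        exact Dvd.dvd.mul_right ⟨3 * r, by push_cast; ring⟩ _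
      · have hqP := Nat.prime_iff_prime_int.mp hq
        have hq2' : ¬ (q : ℤ) ∣ 2 := by
          intro hd
          have : q ∣ 2 := by exact_mod_cast hd
          exact hq2 ((Nat.prime_dvd_prime_iff_eq hq Nat.prime_two).mp this)
        have hqs := (hqP.dvd_or_dvd hd).resolve_left hq2'
        have hq3 : q ≠ 3 := by rintro rfl; exact s3 hqs
        refine ⟨hq3, fun hqN => ?_, ?_⟩
        · have := q_of_N hre him hq hq3 hd hqN
          exact cop q hq hqs ((hqP.dvd_or_dvd this).resolve_left hq2')
        · have : 2 * A.re - A.im = 29 * (2 * s) := by omega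
          rw [this]; exact Dvd.dvd.mul_left (Dvd.dvd.mul_left hd _) _)
  have gm : m = 1 ∨ (m = 31 ∧ Good A 31) := by
    rcases hm with hm | ⟨hm, a, b⟩
    · exact Or.inl hm
    · exact Or.inr ⟨hm, good31 hre him (by omega) (by omega)⟩
  rw [f4]
  rwa [f2 m (good_m gm).1 (good_m gm).2, one_mul] at f1

theorem case_two (h0 : C 0 = 0) (h1 : C 1 = 0) (h2 : C 2 = 1)
    (hrec : ∀ n, C (n + 3) = C (n + 2) + C n)
    {p : ℕ} (hp : p.Prime) (hp2 : p ≠ 2) (hp3 : p ≠ 3) (hp29 : p ≠ 29) (hp31 : p ≠ 31)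
    (X Y : ℤ) (hX : X % 2 = 1) (hY : Y % 2 = 1)
    (h : 8 * (p : ℤ) = X ^ 2 + 31 * Y ^ 2) : ¬ (p : ℤ) ∣ C p := by
  have hp2' : ¬ (p : ℤ) ∣ 2 := by
    intro hd
    have : p ∣ 2 := by exact_mod_cast hd
    exact hp2 ((Nat.prime_dvd_prime_iff_eq hp Nat.prime_two).mp this)
  obtain ⟨r, s, m, e, s3, ps, cop, hm, par⟩ := select hp hp3 hp31 8 X Y (Or.inr ⟨rfl, hX⟩) hp2' h
  have hr : r % 2 = 1 := by omega
  have hs : s % 2 = 1 := by omega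
  let A : E := ⟨(29 * s + 3 * r) / 2, 3 * r⟩
  have hre : 2 * A.re = 29 * s + 3 * r := by
    change 2 * ((29 * s + 3 * r) / 2) = _; omega
  have him : A.im = 3 * r := rfl
  have hAN := A_norm hre him
  have hN2 : ¬ (2 : ℤ) ∣ A.norm := by
    rintro ⟨t, ht⟩
    obtain ⟨j, hj⟩ : ∃ j, s = 2 * j + 1 := ⟨s / 2, by omega⟩
    have e1 : A.norm = 2 * (27 * p * m) + s ^ 2 := by linarith
    rw [hj] at e1
    have : 2 * (27 * p * m + 2 * j ^ 2 + 2 * j - t) + 1 = 0 := by linarith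
    omega
  obtain ⟨F, f1, f2, f3, f4⟩ := common h0 h1 h2 hrec hp hp3 hp29 hp31 A r s (2 * m) hre him
    (by linear_combination e) s3 ps
    (by
      intro q hq hqs
      have hq3 : q ≠ 3 := by rintro rfl; exact s3 hqs
      refine ⟨hq3, fun hqN => cop q hq hqs (q_of_N hre him hq hq3 hqs hqN), ?_⟩
      have : 2 * A.re - A.im = 29 * s := by omega
      rw [this]; exact Dvd.dvd.mul_left (Dvd.dvd.mul_left hqs _) _)
  have gm : m = 1 ∨ (m = 31 ∧ Good A 31) := by
    rcases hm with hm | ⟨hm, a, b⟩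
    · exact Or.inl hm
    · exact Or.inr ⟨hm, good31 hre him a b⟩
  rw [f4]
  intro hF
  rw [hF, map_mul, f2 m (good_m gm).1 (good_m gm).2, mul_one, mul_one] at f1
  exact f3 hN2 (by omega) f1
end
end Cord

theorem cordonnier_divisibility (C : ℕ → ℤ)
    (h0 : C 0 = 0) (h1 : C 1 = 0) (h2 : C 2 = 1)
    (hrec : ∀ n, C (n + 3) = C (n + 2) + C n)
    (p : ℕ) (hp : p.Prime) (hpe : ¬ (p ∣ 2 * 3 * 29 * 31)) :
    (p : ℤ) ∣ C p ↔ ∃ X Y : ℤ, (p : ℤ) = X ^ 2 + 31 * Y ^ 2 := by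
  have hp2 : p ≠ 2 := by rintro rfl; exact hpe (by norm_num)
  have hp3 : p ≠ 3 := by rintro rfl; exact hpe (by norm_num)
  have hp29 : p ≠ 29 := by rintro rfl; exact hpe (by norm_num)
  have hp31 : p ≠ 31 := by rintro rfl; exact hpe (by norm_num)
  constructor
  · intro hC
    have : Fact p.Prime := ⟨hp⟩
    obtain ⟨k, _, _, _⟩ : ∃ (k : Type) (_ : Field k) (_ : IsAlgClosed k), CharP k p :=
      ⟨AlgebraicClosure (ZMod p), inferInstance, inferInstance, inferInstance⟩
    obtain ⟨φ⟩ := Cord.exists_hom k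
    obtain ⟨t0, t1, t2, hR⟩ : ∃ t0 t1 t2 : k, Cord.Roots k t0 t1 t2 := by
      obtain ⟨e, he⟩ : ∃ e : k, e * (29 - e) = 1 := by
        have hd : (Polynomial.X ^ 2 - Polynomial.C (29 : k) * Polynomial.X + Polynomial.C 1).degree
            ≠ 0 := by
          have : (Polynomial.X ^ 2 - Polynomial.C (29 : k) * Polynomial.X + Polynomial.C 1).degree
            = 2 := by compute_degree!
          rw [this]; decide
        obtain ⟨e, he⟩ := IsAlgClosed.exists_root _ hd
        refine ⟨e, ?_⟩
        simp [Polynomial.IsRoot] at he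
        linear_combination - he
      obtain ⟨u, hu⟩ := IsAlgClosed.exists_pow_nat_eq e (n := 3) (by norm_num)
      have he0 : e ≠ 0 := left_ne_zero_of_mul_eq_one he
      have hu0 : u ≠ 0 := by rintro rfl; apply he0; rw [← hu]; simp
      have huv : u * u⁻¹ = 1 := mul_inv_cancel₀ hu0
      have hv3 : u⁻¹ ^ 3 = 29 - e := by
        apply mul_left_cancel₀ he0
        rw [he, ← hu, ← mul_pow, huv, one_pow]
      exact ⟨_, _, _, Cord.Roots.mk' (Cord.phi_om φ) huv (by rw [hu, hv3]; ring)⟩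
    obtain ⟨z, hz⟩ := Cord.square_of h0 h1 h2 hrec hp hp2 hp3 hp29 hp31 hR hC
    rcases Cord.repr_of_square hp hp2 z hz with h | ⟨X, Y, hX, hY, h⟩
    · exact h
    · exact absurd hC (Cord.case_two h0 h1 h2 hrec hp hp2 hp3 hp29 hp31 X Y hX hY h)
  · rintro ⟨X, Y, h⟩
    exact Cord.case_one h0 h1 h2 hrec hp hp2 hp3 hp29 hp31 X Y h
end

section
/- Let f be a monic irreducible cubic polynomial with integer coefficients and let p be a prime not dividing 6·disc(f). Let L be the splitting field of f over Q, assumed non-abelian over Q (i.e. with Galois group S_3), and let 𝔅 be a prime ideal of the ring of integers of L above p, with decomposition group D(𝔅). Then N_p(f) = 3 if and only if #D(𝔅) = 1; N_p(f) = 0 if and only if #D(𝔅) = 3; and N_p(f) = 1 if and only if #D(𝔅) = 2. -/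
open Polynomial NumberField

lemma perm3_aux : ∀ g : Equiv.Perm (Fin 3),
    (g = 1 ∧ (Finset.univ.filter fun i => g i = i).card = 3) ∨
    ((g ^ 2 = 1 ∧ g ≠ 1) ∧ (Finset.univ.filter fun i => g i = i).card = 1) ∨
    ((g ^ 3 = 1 ∧ g ≠ 1) ∧ (Finset.univ.filter fun i => g i = i).card = 0) := by
  decide

lemma perm3_order (g : Equiv.Perm (Fin 3)) (N D : ℕ) (hD : D = orderOf g)
    (hN : N = (Finset.univ.filter fun i => g i = i).card) :
    (N = 3 ↔ D = 1) ∧ (N = 0 ↔ D = 3) ∧ (N = 1 ↔ D = 2) := by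
  rcases perm3_aux g with ⟨h, h'⟩ | ⟨⟨h, h1⟩, h'⟩ | ⟨⟨h, h1⟩, h'⟩
  · rw [h'] at hN
    rw [h, orderOf_one] at hD
    omega
  · rw [h'] at hN
    rw [orderOf_eq_prime h h1] at hD
    omega
  · rw [h'] at hN
    rw [orderOf_eq_prime h h1] at hD
    omega

lemma frob_gen (p : ℕ) [Fact p.Prime] (k : Type*) [Field k] [Finite k] [CharP k p]
    (e : k ≃+* k) : ∃ n : ℕ, ∀ y, e y = y ^ (p ^ n) := by
  let := ZMod.algebra k p
  let e' : k ≃ₐ[ZMod p] k := AlgEquiv.ofRingEquiv (f := e) (fun r => by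
    have : (e : k →+* k).comp (algebraMap (ZMod p) k) = algebraMap (ZMod p) k :=
      Subsingleton.elim _ _
    exact congrArg (fun g => g r) this)
  obtain ⟨n, hn⟩ := (FiniteField.bijective_frobeniusAlgEquivOfAlgebraic_pow (ZMod p) k).2 e'
  refine ⟨n, fun y => ?_⟩
  have h1 : e' y = e y := rfl
  rw [← h1, ← hn]
  simp [FiniteField.coe_frobeniusAlgEquivOfAlgebraic, pow_iterate, ZMod.card]

lemma cubic_coeffs {B : Type*} [CommRing B] (a b c a' b' c' : B)
    (h : (X ^ 3 + C a * X ^ 2 + C b * X + C c : B[X]) = X ^ 3 + C a' * X ^ 2 + C b' * X + C c') :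
    a = a' ∧ b = b' ∧ c = c' := by
  refine ⟨?_, ?_, ?_⟩
  · have := congrArg (fun q => coeff q 2) h
    simpa [coeff_X, coeff_C, coeff_X_pow] using this
  · have := congrArg (fun q => coeff q 1) h
    simpa [coeff_X, coeff_C, coeff_X_pow] using this
  · have := congrArg (fun q => coeff q 0) h
    simpa [coeff_X, coeff_C, coeff_X_pow] using this

set_option maxHeartbeats 1000000 in
lemma main_abs (a b c : ℤ)
    (f : Polynomial ℤ) (hf : f = X ^ 3 + C a * X ^ 2 + C b * X + C c)
    (p : ℕ) [hp : Fact p.Prime]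
    (hpe : ¬ ((p : ℤ) ∣ 6 * (18 * a * b * c - 4 * a ^ 3 * c + a ^ 2 * b ^ 2
      - 4 * b ^ 3 - 27 * c ^ 2)))
    (B : Type*) [CommRing B] [IsDomain B] (x : Fin 3 → B)
    (hx : f.map (algebraMap ℤ B) = (X - C (x 0)) * (X - C (x 1)) * (X - C (x 2)))
    (hfaith : ∀ s t : B ≃ₐ[ℤ] B, (∀ i, s (x i) = t (x i)) → s = t)
    (Q : Ideal B) [hQ : Q.IsMaximal] [Finite (B ⧸ Q)]
    (habove : Q.comap (algebraMap ℤ B) = Ideal.span {(p : ℤ)})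
    (φ : B ≃ₐ[ℤ] B) (hφ : ∀ y, φ y - y ^ p ∈ Q) :
    let N := (f.map (Int.castRingHom (ZMod p))).roots.toFinset.card
    let D := Nat.card {σ : B ≃ₐ[ℤ] B // Q.comap σ = Q}
    (N = 3 ↔ D = 1) ∧ (N = 0 ↔ D = 3) ∧ (N = 1 ↔ D = 2) := by
  intro N D
  let : Field (B ⧸ Q) := Ideal.Quotient.field Q
  have hmem : ∀ z : ℤ, ((z : B) ∈ Q) ↔ (p : ℤ) ∣ z := by
    intro z
    rw [← Ideal.mem_span_singleton, ← habove, Ideal.mem_comap]; simp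
  have : CharP (B ⧸ Q) p := ⟨fun n => by
    have := hmem n
    rw [← Int.natCast_dvd_natCast, ← this, ← Ideal.Quotient.eq_zero_iff_mem]; simp⟩
  let := ZMod.algebra (B ⧸ Q) p
  -- coefficients
  have hev : ∀ y : B, y ^ 3 + a * y ^ 2 + b * y + c = (y - x 0) * (y - x 1) * (y - x 2) := by
    intro y
    have := congrArg (eval y) hx
    simpa [hf] using this
  have hx' : (X ^ 3 + C (a : B) * X ^ 2 + C (b : B) * X + C (c : B))
      = (X - C (x 0)) * (X - C (x 1)) * (X - C (x 2)) := by
    rw [← hx, hf]; simp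
  have hexp : (X - C (x 0)) * (X - C (x 1)) * (X - C (x 2)) =
      X ^ 3 + C (-(x 0 + x 1 + x 2)) * X ^ 2 + C (x 0 * x 1 + x 0 * x 2 + x 1 * x 2) * X
      + C (-(x 0 * x 1 * x 2)) := by
    simp only [map_neg, map_add, map_mul]; ring
  rw [hexp] at hx'
  obtain ⟨ha, hb, hc⟩ := cubic_coeffs _ _ _ _ _ _ hx'
  have hdisc : ((6 * (18 * a * b * c - 4 * a ^ 3 * c + a ^ 2 * b ^ 2
      - 4 * b ^ 3 - 27 * c ^ 2) : ℤ) : B) =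
      6 * ((x 0 - x 1) * (x 0 - x 2) * (x 1 - x 2)) ^ 2 := by
    push_cast
    rw [ha, hb, hc]; ring
  have hne : 6 * ((x 0 - x 1) * (x 0 - x 2) * (x 1 - x 2)) ^ 2 ∉ Q := by
    rw [← hdisc, hmem]; exact hpe
  let π := Ideal.Quotient.mk Q
  have h01 : π (x 0) ≠ π (x 1) := fun h => hne (by
    rw [Ideal.Quotient.eq] at h
    have : 6 * ((x 0 - x 1) * (x 0 - x 2) * (x 1 - x 2)) ^ 2
      = (6 * (x 0 - x 1) * ((x 0 - x 2) * (x 1 - x 2)) ^ 2) * (x 0 - x 1) := by ring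
    rw [this]; exact Q.mul_mem_left _ h)
  have h02 : π (x 0) ≠ π (x 2) := fun h => hne (by
    rw [Ideal.Quotient.eq] at h
    have : 6 * ((x 0 - x 1) * (x 0 - x 2) * (x 1 - x 2)) ^ 2
      = (6 * (x 0 - x 2) * ((x 0 - x 1) * (x 1 - x 2)) ^ 2) * (x 0 - x 2) := by ring
    rw [this]; exact Q.mul_mem_left _ h)
  have h12 : π (x 1) ≠ π (x 2) := fun h => hne (by
    rw [Ideal.Quotient.eq] at h
    have : 6 * ((x 0 - x 1) * (x 0 - x 2) * (x 1 - x 2)) ^ 2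
      = (6 * (x 1 - x 2) * ((x 0 - x 1) * (x 0 - x 2)) ^ 2) * (x 1 - x 2) := by ring
    rw [this]; exact Q.mul_mem_left _ h)
  have hπinj : Function.Injective (fun i => π (x i)) := by
    intro i j hij
    fin_cases i <;> fin_cases j
    exacts [rfl, absurd hij h01, absurd hij h02, absurd hij.symm h01, rfl, absurd hij h12,
      absurd hij.symm h02, absurd hij.symm h12, rfl]
  have hxinj : Function.Injective x := fun i j h => hπinj (congrArg π h)
  -- permutation action
  have hex : ∀ (s : B ≃ₐ[ℤ] B) (i : Fin 3), ∃ j, s (x i) = x j := by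
    intro s i
    have h1 : (x i) ^ 3 + a * (x i) ^ 2 + b * (x i) + c = 0 := by
      rw [hev]; fin_cases i <;> simp
    have h2 := congrArg s h1
    simp only [map_add, map_mul, map_pow, map_intCast, map_zero] at h2
    rw [hev] at h2
    rcases mul_eq_zero.1 h2 with h | h
    · rcases mul_eq_zero.1 h with h | h
      · exact ⟨0, sub_eq_zero.1 h⟩
      · exact ⟨1, sub_eq_zero.1 h⟩
    · exact ⟨2, sub_eq_zero.1 h⟩
  choose r hr using hex
  let ρ : (B ≃ₐ[ℤ] B) →* Equiv.Perm (Fin 3) := MonoidHom.toHomPerm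
    { toFun := fun s => (r s : Function.End (Fin 3))
      map_one' := by
        funext i; apply hxinj; rw [← hr]; rfl
      map_mul' := by
        intro s t
        funext i; apply hxinj; rw [← hr]
        change s (t (x i)) = x (r s (r t i))
        rw [← hr, ← hr] }
  have hρ : ∀ s i, x (ρ s i) = s (x i) := fun s i => (hr s i).symm
  have hρinj : Function.Injective ρ := by
    intro s t h
    apply hfaith
    intro i
    rw [← hρ, ← hρ, h]
  have hφ' : ∀ y, π (φ y) = π y ^ p := by
    intro y
    rw [← map_pow]; exact Ideal.Quotient.eq.2 (hφ y)
  have hφn : ∀ (n : ℕ) y, π ((φ ^ n) y) = π y ^ (p ^ n) := by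
    intro n
    induction n with
    | zero => intro y; simp
    | succ n ih =>
      intro y
      rw [pow_succ', AlgEquiv.mul_apply, hφ', ih, ← pow_mul, pow_succ]
  apply perm3_order (ρ φ)
  · rw [orderOf_injective ρ hρinj, ← Nat.card_zpowers]
    have hφQ : Q.comap φ = Q := by
      ext y
      rw [Ideal.mem_comap, ← Ideal.Quotient.eq_zero_iff_mem, ← Ideal.Quotient.eq_zero_iff_mem]
      change π (φ y) = 0 ↔ _
      rw [hφ' y]
      exact pow_eq_zero_iff hp.out.ne_zero
    apply Nat.card_congr
    apply Equiv.subtypeEquivRight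
    intro s
    constructor
    · intro hs
      let e : (B ⧸ Q) ≃+* (B ⧸ Q) := Ideal.quotientEquiv Q Q (s : B ≃+* B) (by
        have h9 : Q = Ideal.map (s : B →+* B) (Ideal.comap (s : B →+* B) Q) :=
          (Ideal.map_comap_of_surjective (s : B →+* B) s.surjective Q).symm
        have h10 : Ideal.comap (s : B →+* B) Q = Q := hs
        rw [h10] at h9
        exact h9)
      obtain ⟨n, hn⟩ := frob_gen p (B ⧸ Q) e
      have : s = φ ^ n := by
        apply hfaith
        intro i
        rw [← hρ, ← hρ]
        congr 1
        apply hπinj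
        change π (x _) = π (x _)
        rw [hρ, hρ, hφn, ← hn]
        rfl
      rw [this]; exact Subgroup.npow_mem_zpowers _ _
    · have : Subgroup.zpowers φ ≤
        { carrier := {s : B ≃ₐ[ℤ] B | ∀ y, s y ∈ Q ↔ y ∈ Q}
          one_mem' := fun y => Iff.rfl
          mul_mem' := fun {s t} hs ht y => (hs (t y)).trans (ht y)
          inv_mem' := fun {s} hs y => by
            have := hs (s⁻¹ y)
            rw [← this]
            change s (s.symm y) ∈ Q ↔ _
            simp } := by
        rw [Subgroup.zpowers_le]
        intro y
        conv_rhs => rw [← hφQ]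
        rfl
      intro h
      ext y
      exact this h y
  · -- root count
    have hroot : ∀ z : B ⧸ Q, z ^ 3 + a * z ^ 2 + b * z + c =
        (z - π (x 0)) * (z - π (x 1)) * (z - π (x 2)) := by
      intro z
      obtain ⟨y, rfl⟩ := Ideal.Quotient.mk_surjective z
      have := congrArg π (hev y)
      simpa using this
    have hinj : Function.Injective (algebraMap (ZMod p) (B ⧸ Q)) := RingHom.injective _
    have hf0 : f.map (Int.castRingHom (ZMod p)) ≠ 0 := by
      apply Monic.ne_zero
      apply Monic.map
      rw [hf]; monicity!
    have hrt : ∀ t : ZMod p, t ∈ (f.map (Int.castRingHom (ZMod p))).roots.toFinset ↔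
        ∃ i, algebraMap (ZMod p) (B ⧸ Q) t = π (x i) := by
      intro t
      rw [Multiset.mem_toFinset, mem_roots hf0, IsRoot.def, ← map_eq_zero_iff _ hinj]
      have : algebraMap (ZMod p) (B ⧸ Q) (eval t (f.map (Int.castRingHom (ZMod p)))) =
          (algebraMap (ZMod p) (B ⧸ Q) t) ^ 3 + a * (algebraMap (ZMod p) (B ⧸ Q) t) ^ 2
            + b * (algebraMap (ZMod p) (B ⧸ Q) t) + c := by
        rw [hf]; simp
      rw [this, hroot, mul_eq_zero, mul_eq_zero, sub_eq_zero, sub_eq_zero, sub_eq_zero]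
      simp [Fin.exists_fin_succ, or_assoc]
    have key : (f.map (Int.castRingHom (ZMod p))).roots.toFinset.map ⟨_, hinj⟩ =
        (Finset.univ.filter fun i => ρ φ i = i).map ⟨_, hπinj⟩ := by
      ext z
      simp only [Finset.mem_map, hrt, Function.Embedding.coeFn_mk, Finset.mem_filter,
        Finset.mem_univ, true_and]
      constructor
      · rintro ⟨t, ⟨i, hi⟩, rfl⟩
        refine ⟨i, ?_, hi.symm⟩
        apply hπinj
        change π (x _) = π (x _)
        rw [hρ, hφ', ← hi, ← map_pow, ZMod.pow_card]
      · rintro ⟨i, hi, rfl⟩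
        have h1 : π (x i) ^ p = π (x i) := by
          rw [← hφ', ← hρ, hi]
        have h2 := (Subfield.mem_bot_iff_pow_eq_self (F := B ⧸ Q) (p := p)).2 h1
        obtain ⟨z, hz⟩ := (mem_bot_iff_intCast p _).1 h2
        have h3 : algebraMap (ZMod p) (B ⧸ Q) (z : ZMod p) = π (x i) := by
          rw [hz.symm]; simp
        exact ⟨z, ⟨i, h3⟩, h3⟩
    have := congrArg Finset.card key
    rwa [Finset.card_map, Finset.card_map] at this

theorem decomposition_group_nonabelian (a b c : ℤ)
    (f : Polynomial ℤ) (hf : f = X ^ 3 + C a * X ^ 2 + C b * X + C c)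
    (hirr : Irreducible (f.map (Int.castRingHom ℚ)))
    (p : ℕ) [Fact p.Prime]
    (hpe : ¬ ((p : ℤ) ∣ 6 * (18 * a * b * c - 4 * a ^ 3 * c + a ^ 2 * b ^ 2
      - 4 * b ^ 3 - 27 * c ^ 2)))
    (L : Type) [Field L] [NumberField L]
    [IsSplittingField ℚ L (f.map (Int.castRingHom ℚ))]
    (hnab : ∃ σ τ : L ≃ₐ[ℚ] L, σ * τ ≠ τ * σ)
    (𝔅 : Ideal (𝓞 L)) (h𝔅 : 𝔅.IsPrime)
    (habove : 𝔅.comap (algebraMap ℤ (𝓞 L)) = Ideal.span {(p : ℤ)}) :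
    let N := (f.map (Int.castRingHom (ZMod p))).roots.toFinset.card
    let D := Nat.card {σ : L ≃ₐ[ℚ] L // 𝔅.comap (galRestrict ℤ ℚ L (𝓞 L) σ) = 𝔅}
    (N = 3 ↔ D = 1) ∧ (N = 0 ↔ D = 3) ∧ (N = 1 ↔ D = 2) := by
  intro N D
  have hp : p.Prime := Fact.out
  have hmon : f.Monic := by rw [hf]; monicity!
  have hdeg : f.natDegree = 3 := by rw [hf]; compute_degree!
  have hmm : (f.map (Int.castRingHom ℚ)).map (algebraMap ℚ L) = f.map (algebraMap ℤ L) := by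
    rw [Polynomial.map_map]; congr 1; exact Subsingleton.elim _ _
  have hspl := IsSplittingField.splits L (f.map (Int.castRingHom ℚ))
  have hadj := IsSplittingField.adjoin_rootSet L (f.map (Int.castRingHom ℚ))
  rw [hmm] at hspl
  have hcard := hspl.natDegree_eq_card_roots
  rw [hmon.natDegree_map, hdeg] at hcard
  obtain ⟨r0, r1, r2, hr⟩ := Multiset.card_eq_three.1 hcard.symm
  have hprod := hspl.eq_prod_roots_of_monic (hmon.map _)
  have hint : ∀ y ∈ (f.map (algebraMap ℤ L)).roots, IsIntegral ℤ y := by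
    intro y hy
    refine ⟨f, hmon, ?_⟩
    rw [← eval_map]
    exact (mem_roots ((hmon.map _).ne_zero)).1 hy
  rw [hr] at hint hprod
  let x : Fin 3 → 𝓞 L := ![⟨r0, hint r0 (by simp)⟩, ⟨r1, hint r1 (by simp)⟩,
    ⟨r2, hint r2 (by simp)⟩]
  have hx0 : algebraMap (𝓞 L) L (x 0) = r0 := rfl
  have hx1 : algebraMap (𝓞 L) L (x 1) = r1 := rfl
  have hx2 : algebraMap (𝓞 L) L (x 2) = r2 := rfl
  have hx : f.map (algebraMap ℤ (𝓞 L)) = (X - C (x 0)) * (X - C (x 1)) * (X - C (x 2)) := by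
    apply Polynomial.map_injective (algebraMap (𝓞 L) L) (RingOfIntegers.coe_injective)
    rw [Polynomial.map_map, ← IsScalarTower.algebraMap_eq, hprod]
    simp [hx0, hx1, hx2, mul_assoc]
  have hfaith : ∀ s t : (𝓞 L) ≃ₐ[ℤ] (𝓞 L), (∀ i, s (x i) = t (x i)) → s = t := by
    intro s t hst
    obtain ⟨s, rfl⟩ := (galRestrict ℤ ℚ L (𝓞 L)).surjective s
    obtain ⟨t, rfl⟩ := (galRestrict ℤ ℚ L (𝓞 L)).surjective t
    congr 1
    have : (s : L →ₐ[ℚ] L) = t := by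
      apply AlgHom.ext_of_adjoin_eq_top hadj
      intro y hy
      have hy' : y ∈ (f.map (algebraMap ℤ L)).roots := by
        rw [mem_rootSet'] at hy
        rw [hmm] at hy
        rw [mem_roots hy.1, IsRoot.def, ← hmm, eval_map_algebraMap]
        exact hy.2
      have hi : ∃ i, algebraMap (𝓞 L) L (x i) = y := by
        rw [hr] at hy'
        simp only [Multiset.insert_eq_cons, Multiset.mem_cons, Multiset.mem_singleton] at hy'
        rcases hy' with rfl | rfl | rfl
        exacts [⟨0, hx0⟩, ⟨1, hx1⟩, ⟨2, hx2⟩]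
      obtain ⟨i, rfl⟩ := hi
      have := congrArg (algebraMap (𝓞 L) L) (hst i)
      rw [algebraMap_galRestrict_apply, algebraMap_galRestrict_apply] at this
      exact this
    ext y
    exact congrArg (fun g : L →ₐ[ℚ] L => g y) this
  have hne : 𝔅 ≠ ⊥ := by
    rintro rfl
    have : (p : ℤ) ∈ Ideal.comap (algebraMap ℤ (𝓞 L)) ⊥ := by
      rw [habove]; exact Ideal.mem_span_singleton_self _
    rw [Ideal.mem_comap] at this
    simp [hp.ne_zero] at this
  have : 𝔅.IsMaximal := h𝔅.isMaximal hne
  have : Finite (𝓞 L ⧸ 𝔅) := Ideal.finiteQuotientOfFreeOfNeBot 𝔅 hne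
  have : IsGalois ℚ L := IsGalois.of_separable_splitting_field (hirr.separable)
  have : Finite (𝓞 L ≃ₐ[ℤ] 𝓞 L) := Finite.of_equiv _ (galRestrict ℤ ℚ L (𝓞 L)).toEquiv
  have := Algebra.isInvariant_of_isGalois' ℤ ℚ L (𝓞 L)
  obtain ⟨φ, hφ⟩ := IsArithFrobAt.exists_of_isInvariant ℤ (𝓞 L ≃ₐ[ℤ] 𝓞 L) 𝔅
  have hφ' : ∀ y, φ y - y ^ p ∈ 𝔅 := by
    intro y
    have := hφ y
    rw [Ideal.under_def, habove, Int.card_ideal_quot] at this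
    exact this
  have := main_abs a b c f hf p hpe (𝓞 L) x hx hfaith 𝔅 habove φ hφ'
  have hD : D = Nat.card {σ : 𝓞 L ≃ₐ[ℤ] 𝓞 L // 𝔅.comap σ = 𝔅} :=
    Nat.card_congr ((galRestrict ℤ ℚ L (𝓞 L)).toEquiv.subtypeEquiv (fun _ => Iff.rfl))
  rw [hD]
  exact this
end

section
/- Let (u_n) be defined by u_0 = 0, u_1 = -1, u_2 = -1 and u_{n+3} = -u_{n+1} - u_n (characteristic polynomial f = x^3 + x + 1, disc(f) = -31). Then for any prime p not in {3, 31}, p divides u_{p-1} if and only if there exist integers X, Y such that 4p = X^2 + 31Y^2. -/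
section

open QuadraticAlgebra

abbrev OO := QuadraticAlgebra ℤ (-1) (-1)

lemma OO_norm (z : OO) : norm z = z.re ^ 2 - z.re * z.im + z.im ^ 2 := by
  rw [norm_def]; ring

lemma OO_norm_pos (z : OO) (hz : z ≠ 0) : 0 < norm z := by
  rw [OO_norm]
  by_contra h
  apply hz
  have h1 : z.im = 0 := by nlinarith [sq_nonneg (2 * z.re - z.im), sq_nonneg z.im]
  have h2 : z.re = 0 := by rw [h1] at h; nlinarith
  ext <;> simp [h1, h2]

instance : IsDomain OO := by
  have : NoZeroDivisors OO := ⟨by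
    intro a b h
    by_contra hc
    push Not at hc
    have h1 := OO_norm_pos a hc.1
    have h2 := OO_norm_pos b hc.2
    have h3 : norm (a * b) = 0 := by rw [h]; simp
    rw [map_mul] at h3
    nlinarith [mul_pos h1 h2]⟩
  exact NoZeroDivisors.to_isDomain _

lemma OO_star_mul (z : OO) : z * star z = ((norm z : ℤ) : OO) := by
  rw [← algebraMap_norm_eq_mul_star]; rfl

lemma OO_omega_prim : IsPrimitiveRoot (⟨0, 1⟩ : OO) 3 := by
  have : orderOf (⟨0, 1⟩ : OO) = 3 := by
    have : Fact (Nat.Prime 3) := ⟨Nat.prime_three⟩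
    apply orderOf_eq_prime
    · ext <;> simp [pow_succ]
    · intro h
      have := congrArg QuadraticAlgebra.re h
      simp at this
  rw [← this]
  exact IsPrimitiveRoot.orderOf _

lemma OO_cube (z : OO) (h : z ^ 3 = 1) : z = 1 ∨ z = ⟨0, 1⟩ ∨ z = ⟨-1, -1⟩ := by
  have h1 : (z - 1) * ((z - ⟨0, 1⟩) * (z - ⟨-1, -1⟩)) = 0 := by
    have e1 : (⟨0, 1⟩ : OO) + ⟨-1, -1⟩ = -1 := by ext <;> simp
    have e2 : (⟨0, 1⟩ : OO) * ⟨-1, -1⟩ = 1 := by ext <;> simp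
    linear_combination h - (z - 1) * z * e1 + (z - 1) * e2
  rcases mul_eq_zero.1 h1 with h | h
  · left; exact sub_eq_zero.1 h
  · rcases mul_eq_zero.1 h with h | h
    · right; left; exact sub_eq_zero.1 h
    · right; right; exact sub_eq_zero.1 h

lemma OO_cube_norm (z : OO) (h : z ^ 3 = 1) : z * star z = 1 := by
  rw [OO_star_mul]
  rcases OO_cube z h with h | h | h <;> rw [h] <;> simp [OO_norm]

lemma OO_cube_one {E : Type} [Field E] (φ : OO →+* E) (h3 : (3 : E) ≠ 0) (z : OO) (h : z ^ 3 = 1)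
    (hz : φ z = 1) : z = 1 := by
  have key : (⟨0, 1⟩ : OO) ^ 2 + ⟨0, 1⟩ + 1 = 0 := by ext <;> simp [pow_two]
  have key2 := congrArg φ key
  simp only [map_add, map_pow, map_one, map_zero] at key2
  rcases OO_cube z h with h | h | h
  · exact h
  · exfalso; apply h3; rw [← h, hz] at key2; linear_combination key2
  · exfalso; apply h3
    have : (⟨-1, -1⟩ : OO) = ⟨0, 1⟩ ^ 2 := by ext <;> simp [pow_two]
    rw [h, this, map_pow] at hz
    have h4 : φ ⟨0,1⟩ = -2 := by linear_combination key2 - hz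
    rw [h4] at hz; linear_combination hz

def Prim (z : OO) : Prop := (3 : ℤ) ∣ z.im ∧ ¬ (3 : ℤ) ∣ z.re


def Rec (α : OO) (c : OO) (q : ℕ) [Fact q.Prime] : Prop :=
  ∀ φ : OO →+* AlgebraicClosure (ZMod q),
    (q % 3 = 1 → φ α ^ ((q - 1) / 3) = φ c * φ (star α) ^ ((q - 1) / 3)) ∧
    (q % 3 = 2 → φ (star α) ^ ((q + 1) / 3) = φ c * φ α ^ ((q + 1) / 3))

def Good (α : OO) : Prop := ∃ χ : ℤ → OO, (∀ m n, χ (m * n) = χ m * χ n) ∧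
  (∀ m k, χ (m + norm α * k) = χ m) ∧ (∀ n, IsCoprime n (norm α) → χ n ^ 3 = 1) ∧
  ∀ (q : ℕ) [Fact q.Prime], IsCoprime (q : ℤ) (3 * norm α) → Rec α (χ q) q

lemma Good.star {α : OO} (h : Good α) : Good (star α) := by
  obtain ⟨χ, h1, h2, h3, h4⟩ := h
  refine ⟨fun n => Star.star (χ n), ?_, ?_, ?_, ?_⟩
  · intro m n; simp [h1]
  · intro m k; simp only [QuadraticAlgebra.norm_star, h2]
  · intro n hn; rw [QuadraticAlgebra.norm_star] at hn; rw [← star_pow, h3 n hn, star_one]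
  · intro q _ hq φ
    rw [QuadraticAlgebra.norm_star] at hq
    have := h4 q hq (φ.comp (starRingEnd OO))
    simpa [starRingEnd_apply] using this

lemma Good.mul {α β : OO} (h : Good α) (h' : Good β) : Good (α * β) := by
  obtain ⟨χ, h1, h2, h3, h4⟩ := h
  obtain ⟨χ', h1', h2', h3', h4'⟩ := h'
  refine ⟨fun n => χ n * χ' n, ?_, ?_, ?_, ?_⟩
  · intro m n; simp only [h1, h1']; ring
  · intro m k
    have e1 := h2 m (norm β * k)
    have e2 := h2' m (norm α * k)
    simp only [map_mul]
    rw [mul_assoc, e1, mul_left_comm, e2]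
  · intro n hn
    rw [map_mul] at hn
    rw [mul_pow, h3 n hn.of_mul_right_left, h3' n hn.of_mul_right_right, one_mul]
  · intro q _ hq φ
    rw [map_mul] at hq
    have hq1 : IsCoprime (q : ℤ) (3 * norm α) := hq.of_isCoprime_of_dvd_right ⟨norm β, by ring⟩
    have hq2 : IsCoprime (q : ℤ) (3 * norm β) := hq.of_isCoprime_of_dvd_right ⟨norm α, by ring⟩
    have a1 := h4 q hq1 φ
    have a2 := h4' q hq2 φ
    constructor
    · intro h
      simp only [star_mul, map_mul, mul_pow]
      rw [a1.1 h, a2.1 h]; ring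
    · intro h
      simp only [star_mul, map_mul, mul_pow]
      rw [a1.2 h, a2.2 h]; ring

lemma Good.int (n : ℤ) : Good (n : OO) := by
  refine ⟨fun _ => 1, by simp, by simp, by simp, ?_⟩
  intro q _ _ φ
  have : Star.star (n : OO) = n := by ext <;> simp
  simp [this]

lemma neg_one_cube {P : ℕ} [Fact P.Prime] {E : Type} [Field E] (χ : MulChar (ZMod P) E)
    (h : orderOf χ = 3) : χ (-1) = 1 := by
  have h3 : χ ^ 3 = 1 := h ▸ pow_orderOf_eq_one χ
  have e1 : χ (-1) ^ 2 = 1 := by rw [← map_pow]; simp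
  have e2 : χ (-1) ^ 3 = 1 := by
    rw [← MulChar.pow_apply' _ (by norm_num), h3]; exact MulChar.one_apply (by simp)
  calc χ (-1) = χ (-1) ^ 3 := by rw [pow_succ, e1, one_mul]
    _ = 1 := e2

lemma gauss_cube {P : ℕ} [Fact P.Prime] {E : Type} [Field E] (χ : MulChar (ZMod P) E)
    (h : orderOf χ = 3) (ψ : AddChar (ZMod P) E) (hψ : ψ.IsPrimitive) :
    gaussSum χ ψ ^ 3 = P * jacobiSum χ χ := by
  have := gaussSum_pow_eq_prod_jacobiSum (χ := χ) (by rw [h]; norm_num) hψ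
  rw [h, neg_one_cube χ h] at this
  simpa using this

lemma star_char {P : ℕ} [Fact P.Prime] (χ : MulChar (ZMod P) OO) (h : orderOf χ = 3) :
    χ.ringHomComp (starRingEnd OO) = χ⁻¹ := by
  rw [eq_comm, inv_eq_iff_mul_eq_one]
  apply MulChar.ext
  intro x
  have h3 : χ ^ 3 = 1 := h ▸ pow_orderOf_eq_one χ
  rw [MulChar.mul_apply, MulChar.one_apply x.isUnit, MulChar.ringHomComp_apply, starRingEnd_apply]
  apply OO_cube_norm
  rw [← MulChar.pow_apply' _ (by norm_num), h3, MulChar.one_apply x.isUnit]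

lemma pow_q3 {M : Type} [Monoid M] (x : M) {q k r : ℕ} (h : q = 3 * k + r) :
    x ^ q = (x ^ 3) ^ k * x ^ r := by rw [h, pow_add, pow_mul]

lemma prime_rec {P : ℕ} [hP : Fact P.Prime] (χ : MulChar (ZMod P) OO) (h : orderOf χ = 3)
    (q : ℕ) [hq : Fact q.Prime] (hqP : q ≠ P) (hq3 : q ≠ 3) :
    Rec (jacobiSum χ χ) (χ (q : ZMod P)) q := by
  intro φ
  have hE3 : (3 : AlgebraicClosure (ZMod q)) ≠ 0 := by
    intro h0
    have : ((3 : ℕ) : AlgebraicClosure (ZMod q)) = 0 := by exact_mod_cast h0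
    rw [CharP.cast_eq_zero_iff _ q] at this
    exact hq3 ((Nat.prime_dvd_prime_iff_eq hq.1 Nat.prime_three).1 this)
  have hEP : (P : AlgebraicClosure (ZMod q)) ≠ 0 := by
    intro h0
    rw [CharP.cast_eq_zero_iff _ q] at h0
    exact hqP ((Nat.prime_dvd_prime_iff_eq hq.1 hP.1).1 h0)
  set κ := χ.ringHomComp φ with hκ
  have h3 : χ ^ 3 = 1 := h ▸ pow_orderOf_eq_one χ
  have hκ3 : κ ^ 3 = 1 := by rw [hκ, MulChar.ringHomComp_pow, h3, MulChar.ringHomComp_one]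
  have hχ1 : χ ≠ 1 := by rintro rfl; simp at h
  have hκ1 : κ ≠ 1 := by
    intro hk
    apply hχ1
    apply MulChar.ext
    intro x
    have : κ x = 1 := by rw [hk, MulChar.one_apply x.isUnit]
    rw [MulChar.one_apply x.isUnit]
    refine OO_cube_one φ hE3 _ ?_ this
    rw [← MulChar.pow_apply' _ (by norm_num), h3, MulChar.one_apply x.isUnit]
  have : Fact (Nat.Prime 3) := ⟨Nat.prime_three⟩
  have hord : orderOf κ = 3 := orderOf_eq_prime hκ3 hκ1
  have hord' : orderOf κ⁻¹ = 3 := by rw [orderOf_inv, hord]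
  have : NeZero (P : AlgebraicClosure (ZMod q)) := ⟨hEP⟩
  obtain ⟨ζ, hζ⟩ := HasEnoughRootsOfUnity.exists_primitiveRoot (AlgebraicClosure (ZMod q)) P
  have hψ := AddChar.zmodChar_primitive_of_primitive_root P hζ
  set ψ := AddChar.zmodChar P ((IsPrimitiveRoot.iff_def ζ P).mp hζ).left with hψdef
  have g3 := gauss_cube κ hord ψ hψ
  have g3' := gauss_cube κ⁻¹ hord' ψ hψ
  have J1 : jacobiSum κ κ = φ (jacobiSum χ χ) := jacobiSum_ringHomComp χ χ φ
  have J2 : jacobiSum κ⁻¹ κ⁻¹ = φ (star (jacobiSum χ χ)) := by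
    rw [hκ, MulChar.ringHomComp_inv, jacobiSum_ringHomComp, ← star_char χ h,
      jacobiSum_ringHomComp, starRingEnd_apply]
  rw [J1] at g3
  rw [J2] at g3'
  have hc : (P : AlgebraicClosure (ZMod q)) = (Fintype.card (ZMod P) : AlgebraicClosure (ZMod q)) := by
    rw [ZMod.card]
  have gne : gaussSum κ ψ ≠ 0 := gaussSum_ne_zero_of_nontrivial (hc ▸ hEP) hκ1 hψ
  have gne' : gaussSum κ⁻¹ ψ ≠ 0 :=
    gaussSum_ne_zero_of_nontrivial (hc ▸ hEP) (by simpa using hκ1) hψ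
  have hqu : IsUnit (q : ZMod P) := by
    rw [isUnit_iff_ne_zero]
    intro h0
    rw [ZMod.natCast_eq_zero_iff] at h0
    exact hqP ((Nat.prime_dvd_prime_iff_eq hP.1 hq.1).1 h0).symm
  have hcc : φ (χ (q : ZMod P)) = κ q := rfl
  rw [hcc]
  have hc3 : κ (q : ZMod P) ^ 3 = 1 := by
    rw [← MulChar.pow_apply' _ (by norm_num), hκ3, MulChar.one_apply hqu]
  have inv_eq : κ⁻¹ = κ ^ 2 := by
    rw [inv_eq_iff_mul_eq_one, ← pow_succ', hκ3]
  have frob (μ : MulChar (ZMod P) (AlgebraicClosure (ZMod q))) :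
      (μ ^ q) (q : ZMod P) * gaussSum μ ψ ^ q = gaussSum (μ ^ q) ψ := by
    rw [gaussSum_frob, AddChar.pow_mulShift]
    have := gaussSum_mulShift (μ ^ q) ψ hqu.unit
    rwa [hqu.unit_spec] at this
  have f1 := frob κ
  have f2 := frob κ⁻¹
  set g := gaussSum κ ψ
  set g' := gaussSum κ⁻¹ ψ
  set c := κ (q : ZMod P)
  have hinvc : κ⁻¹ (q : ZMod P) = c ^ 2 := by
    rw [inv_eq, MulChar.pow_apply' _ (by norm_num)]
  have hcne : c ≠ 0 := by intro h0; rw [h0] at hc3; norm_num at hc3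
  constructor
  · intro hm
    obtain ⟨k, hk⟩ : ∃ k, q = 3 * k + 1 := ⟨q / 3, by omega⟩
    have hk' : (q - 1) / 3 = k := by omega
    rw [hk']
    have e1 : κ ^ q = κ := by rw [pow_q3 κ hk, hκ3, one_pow, one_mul, pow_one]
    have e2 : κ⁻¹ ^ q = κ⁻¹ := by rw [inv_pow, e1]
    rw [e1] at f1
    rw [e2, hinvc] at f2
    have e3 : g ^ q = (P * φ (jacobiSum χ χ)) ^ k * g := by
      rw [← g3, ← pow_mul, ← pow_succ, ← hk]
    have e4 : g' ^ q = (P * φ (star (jacobiSum χ χ))) ^ k * g' := by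
      rw [← g3', ← pow_mul, ← pow_succ, ← hk]
    rw [e3] at f1
    rw [e4] at f2
    have s1 : c * (P * φ (jacobiSum χ χ)) ^ k = 1 := by
      apply mul_right_cancel₀ gne; linear_combination f1
    have s2 : c ^ 2 * (P * φ (star (jacobiSum χ χ))) ^ k = 1 := by
      apply mul_right_cancel₀ gne'; linear_combination f2
    rw [mul_pow] at s1 s2
    apply mul_left_cancel₀ (pow_ne_zero k hEP)
    apply mul_left_cancel₀ hcne
    linear_combination s1 - s2
  · intro hm
    obtain ⟨k, hk⟩ : ∃ k, q = 3 * k + 2 := ⟨q / 3, by omega⟩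
    have hk' : (q + 1) / 3 = k + 1 := by omega
    rw [hk']
    have e1 : κ ^ q = κ⁻¹ := by rw [pow_q3 κ hk, hκ3, one_pow, one_mul, inv_eq]
    have e2 : κ⁻¹ ^ q = κ := by rw [inv_pow, e1, inv_inv]
    rw [e1, hinvc] at f1
    rw [e2] at f2
    have e3 : g ^ q * g = (P * φ (jacobiSum χ χ)) ^ (k + 1) := by
      rw [← g3, ← pow_mul, ← pow_succ]; congr 1; omega
    have e4 : g' ^ q * g' = (P * φ (star (jacobiSum χ χ))) ^ (k + 1) := by
      rw [← g3', ← pow_mul, ← pow_succ]; congr 1; omega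
    apply mul_left_cancel₀ (pow_ne_zero (k + 1) hEP)
    rw [mul_pow] at e3 e4
    have f1' : g ^ q = c * g' := by linear_combination c * f1 - g ^ q * hc3
    have f2' : g' ^ q = c ^ 2 * g := by linear_combination c ^ 2 * f2 - g' ^ q * hc3
    rw [f1'] at e3
    rw [f2'] at e4
    linear_combination c * e3 - e4

lemma exists_J (P : ℕ) (hP : P.Prime) (hP3 : P % 3 = 1) :
    ∃ J : OO, Prim J ∧ norm J = P ∧ Good J := by
  have : Fact P.Prime := ⟨hP⟩
  have hdvd : 3 ∣ Fintype.card (ZMod P) - 1 := by rw [ZMod.card]; omega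
  obtain ⟨χ, h⟩ := MulChar.exists_mulChar_orderOf (ZMod P) hdvd OO_omega_prim
  have h3 : χ ^ 3 = 1 := h ▸ pow_orderOf_eq_one χ
  have hχ1 : χ ≠ 1 := by rintro rfl; simp at h
  have hχ2 : χ * χ ≠ 1 := by
    intro h2
    apply hχ1
    rw [pow_succ, pow_two, h2, one_mul] at h3
    exact h3
  have hn : norm (jacobiSum χ χ) = P := by
    have hinj : Function.Injective (algebraMap OO (FractionRing OO)) :=
      IsFractionRing.injective OO (FractionRing OO)
    have hchar : ringChar (FractionRing OO) ≠ ringChar (ZMod P) := by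
      have : CharZero (FractionRing OO) := charZero_of_injective_algebraMap hinj
      rw [ringChar.eq_zero, ZMod.ringChar_zmod_n]
      exact hP.ne_zero.symm
    have := jacobiSum_mul_jacobiSum_inv (χ := χ.ringHomComp (algebraMap OO (FractionRing OO)))
      (φ := χ.ringHomComp (algebraMap OO (FractionRing OO))) hchar
      ((MulChar.ringHomComp_ne_one_iff hinj).2 hχ1)
      ((MulChar.ringHomComp_ne_one_iff hinj).2 hχ1)
      (by rw [← MulChar.ringHomComp_mul]; exact (MulChar.ringHomComp_ne_one_iff hinj).2 hχ2)
    rw [MulChar.ringHomComp_inv, jacobiSum_ringHomComp, jacobiSum_ringHomComp, ← map_mul,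
      ← star_char χ h, jacobiSum_ringHomComp, starRingEnd_apply, OO_star_mul, ZMod.card] at this
    have h2 : ((norm (jacobiSum χ χ) : ℤ) : OO) = ((P : ℤ) : OO) := by
      apply hinj; rw [this]; simp
    exact Int.cast_injective h2
  refine ⟨jacobiSum χ χ, ?_, hn, ?_⟩
  · obtain ⟨z, -, hz⟩ := exists_jacobiSum_eq_neg_one_add (by norm_num : 2 < 3) h3 h3 hdvd
      OO_omega_prim
    have hw : ((⟨0, 1⟩ : OO) - 1) ^ 2 = ⟨0, -3⟩ := by ext <;> simp [pow_two]
    rw [hw] at hz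
    have e1 : (jacobiSum χ χ).re = -1 + 3 * z.im := by rw [hz]; simp; ring
    have e2 : (jacobiSum χ χ).im = 3 * (z.im - z.re) := by rw [hz]; simp; ring
    unfold Prim
    rw [e1, e2]
    omega
  · refine ⟨fun n => χ (n : ZMod P), ?_, ?_, ?_, ?_⟩
    · intro m n; simp
    · intro m k; simp [hn]
    · intro n hnc
      rw [hn] at hnc
      have hu : IsUnit (n : ZMod P) := (ZMod.coe_int_isUnit_iff_isCoprime n P).2 hnc.symm
      rw [← MulChar.pow_apply' _ (by norm_num), h3, MulChar.one_apply hu]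
    · intro q hq hc
      rw [hn] at hc
      have hq1 : q ≠ P := by
        rintro rfl
        have := hc.of_mul_right_right
        rw [Nat.isCoprime_iff_coprime, Nat.coprime_self] at this
        exact hP.one_lt.ne' this
      have hq3 : q ≠ 3 := by
        rintro rfl
        have := hc.of_mul_right_left
        norm_num at this
      simpa using prime_rec χ h q hq1 hq3

lemma Prim.norm {α : OO} (h : Prim α) : ¬ (3 : ℤ) ∣ QuadraticAlgebra.norm α := by
  obtain ⟨⟨k, hk⟩, h2⟩ := h
  rw [OO_norm, hk]
  intro hd
  have : (3 : ℤ) ∣ α.re ^ 2 := by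
    have := dvd_add hd (Dvd.intro (α.re * k - 3 * k ^ 2) rfl : (3 : ℤ) ∣ 3 * (α.re * k - 3 * k ^ 2))
    ring_nf at this ⊢
    exact this
  exact h2 (Int.prime_three.dvd_of_dvd_pow this)

lemma Prim.of_mul {α β : OO} (h : Prim α) (hm : Prim (α * β)) : Prim β := by
  obtain ⟨⟨k, hk⟩, h2⟩ := h
  obtain ⟨⟨l, hl⟩, h3⟩ := hm
  have e1 : (α * β).im = α.re * β.im + α.im * β.re - α.im * β.im := by simp; ring
  have e2 : (α * β).re = α.re * β.re - α.im * β.im := by simp; ring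
  rw [e1] at hl
  rw [e2] at h3
  constructor
  · have : (3 : ℤ) ∣ α.re * β.im := ⟨l - k * β.re + k * β.im, by rw [hk] at hl; linear_combination hl⟩
    exact (Int.prime_three.dvd_or_dvd this).resolve_left h2
  · intro h
    apply h3
    exact dvd_sub (h.mul_left _) (by rw [hk]; exact ⟨k * β.im, by ring⟩)

lemma Prim.star {α : OO} (h : Prim α) : Prim (star α) := by
  obtain ⟨h1, h2⟩ := h
  unfold Prim
  simp only [re_star, im_star]
  omega

lemma dvd_or_star {P : ℕ} (hP : P.Prime) {π α : OO} (hπ : norm π = P) (h : (P : ℤ) ∣ norm α) :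
    (∃ β, α = π * β) ∨ ∃ β, α = star π * β := by
  have hPp : _root_.Prime (P : ℤ) := Nat.prime_iff_prime_int.1 hP
  have key (ρ : OO) (hρ : norm ρ = P) (hi : (P : ℤ) ∣ (α * ρ).im) : ∃ β, α = star ρ * β := by
    have hr : (P : ℤ) ∣ (α * ρ).re := by
      have h1 : (P : ℤ) ∣ norm (α * ρ) := by rw [map_mul]; exact h.mul_right _
      rw [OO_norm] at h1
      have h2 : (P : ℤ) ∣ (α * ρ).re ^ 2 := by
        have := dvd_sub h1 (hi.mul_right ((α * ρ).im - (α * ρ).re))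
        ring_nf at this ⊢
        exact this
      exact hPp.dvd_of_dvd_pow h2
    obtain ⟨x, hx⟩ := hr
    obtain ⟨y, hy⟩ := hi
    refine ⟨⟨x, y⟩, ?_⟩
    have hρ0 : ρ ≠ 0 := by
      rintro rfl
      simp at hρ
      exact hP.ne_zero (by exact_mod_cast hρ.symm)
    apply mul_right_cancel₀ hρ0
    have e : α * ρ = ((P : ℤ) : OO) * ⟨x, y⟩ := by ext <;> simp [hx, hy]
    rw [e, ← hρ, ← OO_star_mul]; ring
  have hd : (P : ℤ) ∣ (α * star π).im * (α * π).im := by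
    obtain ⟨k, hk⟩ := h
    rw [OO_norm] at hk hπ
    refine ⟨α.im ^ 2 - π.im ^ 2 * k, ?_⟩
    simp
    linear_combination α.im ^ 2 * hπ - π.im ^ 2 * hk
  rcases hPp.dvd_or_dvd hd with h1 | h1
  · left
    have := key (star π) (by rw [QuadraticAlgebra.norm_star, hπ]) h1
    simpa using this
  · right; exact key π hπ h1

lemma inert_dvd {P : ℕ} (hP : P.Prime) (hP3 : P % 3 = 2) {α : OO} (h : (P : ℤ) ∣ norm α) :
    ∃ β, α = ((P : ℤ) : OO) * β := by
  have : Fact P.Prime := ⟨hP⟩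
  have hc : ∀ a b : ZMod P, a ^ 3 = b ^ 3 → a = b := by
    intro a b hab
    obtain ⟨k, hk⟩ : ∃ k, P = 3 * k + 2 := ⟨P / 3, by omega⟩
    have key : ∀ c : ZMod P, c = (c ^ 3) ^ (2 * k + 1) := by
      intro c
      have e := ZMod.pow_card c
      have : (c ^ 3) ^ (2 * k + 1) = c ^ P * c ^ (3 * k + 1) := by
        rw [← pow_mul, ← pow_add]; congr 1; omega
      rw [this, e, ← pow_succ']
      conv_lhs => rw [← e]
      congr 1
    rw [key a, key b, hab]
  rw [OO_norm] at h
  have h0 : ((α.re : ZMod P)) ^ 2 - α.re * α.im + (α.im : ZMod P) ^ 2 = 0 := by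
    have := (ZMod.intCast_zmod_eq_zero_iff_dvd _ P).2 h
    push_cast at this
    exact this
  have h1 : (α.re : ZMod P) = -(α.im : ZMod P) := by
    apply hc
    linear_combination (α.re + α.im : ZMod P) * h0
  have h3 : (3 : ZMod P) ≠ 0 := by
    intro h3
    have : ((3 : ℕ) : ZMod P) = 0 := by exact_mod_cast h3
    rw [ZMod.natCast_eq_zero_iff] at this
    have := (Nat.prime_dvd_prime_iff_eq hP Nat.prime_three).1 this
    omega
  have h2 : (α.im : ZMod P) = 0 := by
    rw [h1] at h0
    have : (3 : ZMod P) * (α.im : ZMod P) ^ 2 = 0 := by linear_combination h0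
    simpa [h3] using this
  rw [h2, neg_zero] at h1
  obtain ⟨x, hx⟩ := (ZMod.intCast_zmod_eq_zero_iff_dvd _ P).1 h1
  obtain ⟨y, hy⟩ := (ZMod.intCast_zmod_eq_zero_iff_dvd _ P).1 h2
  exact ⟨⟨x, y⟩, by ext <;> simp [hx, hy]⟩

lemma norm_one_prim {α : OO} (h : Prim α) (hn : norm α = 1) : ∃ n : ℤ, α = (n : OO) := by
  obtain ⟨⟨k, hk⟩, -⟩ := h
  rw [OO_norm, hk] at hn
  have hk0 : k = 0 := by nlinarith [sq_nonneg (2 * α.re - 3 * k), sq_nonneg k]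
  refine ⟨α.re, ?_⟩
  ext <;> simp [hk, hk0]

lemma good_of_prim (n : ℕ) : ∀ α : OO, Prim α → norm α = n → Good α := by
  induction n using Nat.strong_induction_on with
  | _ n ih =>
    intro α hα hn
    by_cases h1 : n = 1
    · obtain ⟨m, rfl⟩ := norm_one_prim hα (by rw [hn, h1]; rfl)
      exact Good.int m
    obtain ⟨P, hP, hPn⟩ := Nat.exists_prime_and_dvd h1
    have hPd : (P : ℤ) ∣ norm α := by rw [hn]; exact_mod_cast hPn
    have hn0 : 0 < n := by
      rcases Nat.eq_zero_or_pos n with h0 | h0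
      · exfalso; apply hα.norm; rw [hn, h0]; simp
      · exact h0
    have hP3 : P ≠ 3 := by
      rintro rfl; exact hα.norm (by exact_mod_cast hPd)
    have hcase : P % 3 = 1 ∨ P % 3 = 2 := by
      have : P % 3 ≠ 0 := fun h => hP3 ((Nat.prime_dvd_prime_iff_eq Nat.prime_three hP).1
        (Nat.dvd_of_mod_eq_zero h)).symm
      omega
    have step (ρ β : OO) (hρ : Prim ρ) (hg : Good ρ) (hr : 1 < norm ρ) (he : α = ρ * β) :
        Good α := by
      have hβ : Prim β := hρ.of_mul (he ▸ hα)
      have hN : norm ρ * norm β = n := by rw [← map_mul, ← he, hn]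
      have hβ0 : 0 < norm β := by
        by_contra hc
        have : (0 : ℤ) < n := by exact_mod_cast hn0
        nlinarith
      have hlt : norm β < n := by nlinarith
      rw [he]
      refine hg.mul (ih (norm β).toNat (by omega) β hβ (by omega))
    rcases hcase with hc | hc
    · obtain ⟨J, hJ, hJn, hJg⟩ := exists_J P hP hc
      have h1P : (1 : ℤ) < P := by exact_mod_cast hP.one_lt
      rcases dvd_or_star hP hJn hPd with ⟨β, hβ⟩ | ⟨β, hβ⟩
      · exact step J β hJ hJg (by rw [hJn]; exact h1P) hβ
      · exact step _ β hJ.star hJg.star (by rw [QuadraticAlgebra.norm_star, hJn]; exact h1P) hβ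
    · obtain ⟨β, hβ⟩ := inert_dvd hP hc hPd
      refine step _ β ⟨by simp, ?_⟩ (Good.int _) ?_ hβ
      · simp; omega
      · rw [norm_intCast, Int.cast_id]
        have h1P : (1 : ℤ) < P := by exact_mod_cast hP.one_lt
        nlinarith

lemma exists_hom (E : Type) [Field E] [IsAlgClosed E] : Nonempty (OO →+* E) := by
  have hd : (Polynomial.C (1 : E) * Polynomial.X ^ 2 + Polynomial.C 1 * Polynomial.X
      + Polynomial.C 1).degree = 2 := Polynomial.degree_quadratic one_ne_zero
  obtain ⟨w, hw⟩ := IsAlgClosed.exists_root _ (by rw [hd]; norm_num)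
  simp [Polynomial.IsRoot] at hw
  exact ⟨(QuadraticAlgebra.lift (R := ℤ) (a := -1) (b := -1) (A := E)
    ⟨w, by simp; linear_combination hw⟩).toRingHom⟩

lemma cast_ne (q n : ℕ) [hq : Fact q.Prime] (h : ¬ q ∣ n) :
    (n : AlgebraicClosure (ZMod q)) ≠ 0 := by
  rwa [Ne, CharP.cast_eq_zero_iff _ q]

lemma three_ne (q : ℕ) [hq : Fact q.Prime] (h : q ≠ 3) : (3 : AlgebraicClosure (ZMod q)) ≠ 0 := by
  have := cast_ne q 3 (fun hd => h ((Nat.prime_dvd_prime_iff_eq hq.1 Nat.prime_three).1 hd))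
  exact_mod_cast this

lemma hom_apply {E : Type} [Field E] (φ : OO →+* E) (x y : ℤ) :
    φ ⟨x, y⟩ = x + y * φ ⟨0, 1⟩ := by
  have : (⟨x, y⟩ : OO) = (x : OO) + (y : OO) * ⟨0, 1⟩ := by ext <;> simp
  rw [this, map_add, map_mul, map_intCast, map_intCast]

lemma hom_omega {E : Type} [Field E] (φ : OO →+* E) :
    φ ⟨0, 1⟩ ^ 2 + φ ⟨0, 1⟩ + 1 = 0 := by
  have key : (⟨0, 1⟩ : OO) ^ 2 + ⟨0, 1⟩ + 1 = 0 := by ext <;> simp [pow_two]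
  simpa using congrArg φ key

lemma chi_exists (p : ℕ) [hp : Fact p.Prime] (hp3 : 3 < p) (e : ℕ) (X Y t : ℤ)
    (ht : 2 * t = X + 3 * Y) (he0 : e ≠ 0)
    (hY : ¬ (2 : ℤ) ∣ Y) (hX3 : ¬ (3 : ℤ) ∣ X) (hY3 : ¬ (3 : ℤ) ∣ Y)
    (h : 4 * 2 ^ e * (p : ℤ) = X ^ 2 + 31 * Y ^ 2) :
    ∃ c : OO, c ^ 3 = 1 ∧ Rec ⟨t, 3 * Y⟩ c p ∧ (e % 3 = 0 → c = 1) ∧ (e % 3 = 1 → c ≠ 1) := by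
  have hPr : Prim ⟨t, 3 * Y⟩ := ⟨by simp, by simp; omega⟩
  have hnorm : norm (⟨t, 3 * Y⟩ : OO) = 2 ^ e * p - Y ^ 2 := by
    rw [OO_norm]; simp only
    have : 4 * (t ^ 2 - t * (3 * Y) + (3 * Y) ^ 2) = 4 * (2 ^ e * (p : ℤ) - Y ^ 2) := by
      linear_combination (2 * t - 3 * Y + X) * ht - h
    linarith
  have hα0 : (⟨t, 3 * Y⟩ : OO) ≠ 0 := by
    intro h0
    have := hPr.2
    rw [h0] at this
    simp at this
  have hpos := OO_norm_pos _ hα0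
  obtain ⟨χ, m1, m2, m3, m4⟩ := good_of_prim (norm (⟨t, 3 * Y⟩ : OO)).toNat _ hPr (by omega)
  have hn3 := hPr.norm
  rw [hnorm] at m2 m3 m4 hn3
  have hpp : _root_.Prime (p : ℤ) := Nat.prime_iff_prime_int.1 hp.1
  have h2e : (2 : ℤ) ∣ 2 ^ e := dvd_pow_self 2 he0
  have hpY : ¬ (p : ℤ) ∣ Y := by
    intro hd
    have hX : (p : ℤ) ∣ X := by
      apply hpp.dvd_of_dvd_pow (n := 2)
      have : X ^ 2 = p * (4 * 2 ^ e) - Y * (31 * Y) := by linear_combination -h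
      rw [this]
      exact dvd_sub (dvd_mul_right _ _) (hd.mul_right _)
    obtain ⟨x, hx⟩ := hX
    obtain ⟨y, hy⟩ := hd
    have h1 : (p : ℤ) ∣ 2 ^ (e + 2) := by
      refine ⟨x ^ 2 + 31 * y ^ 2, ?_⟩
      apply mul_left_cancel₀ hpp.ne_zero
      rw [hx, hy] at h
      linear_combination h
    have h2 := hpp.dvd_of_dvd_pow h1
    have h3 := Int.le_of_dvd (by norm_num) h2
    omega
  -- a prime not dividing N
  have cop (q : ℕ) (hq : q.Prime) (hq3 : q ≠ 3) (hd : ¬ (q : ℤ) ∣ 2 ^ e * p - Y ^ 2) :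
      IsCoprime (q : ℤ) (3 * (2 ^ e * p - Y ^ 2)) := by
    have hqp : _root_.Prime (q : ℤ) := Nat.prime_iff_prime_int.1 hq
    rw [Prime.coprime_iff_not_dvd hqp]
    intro hh
    rcases hqp.dvd_or_dvd hh with h1 | h1
    · apply hq3
      have : q ∣ 3 := by exact_mod_cast h1
      exact (Nat.prime_dvd_prime_iff_eq hq Nat.prime_three).1 this
    · exact hd h1
  have hdp : ¬ (p : ℤ) ∣ 2 ^ e * p - Y ^ 2 := by
    intro hh
    apply hpY
    apply hpp.dvd_of_dvd_pow (n := 2)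
    have : Y ^ 2 = 2 ^ e * p - (2 ^ e * p - Y ^ 2) := by ring
    rw [this]
    exact dvd_sub (dvd_mul_left _ _) hh
  have hd2 : ¬ ((2 : ℕ) : ℤ) ∣ 2 ^ e * p - Y ^ 2 := by
    intro hh
    apply hY
    apply Int.prime_two.dvd_of_dvd_pow (n := 2)
    have : Y ^ 2 = 2 ^ e * p - (2 ^ e * p - Y ^ 2) := by ring
    rw [this]
    exact dvd_sub (h2e.mul_right _) hh
  have cp := cop p hp.1 (by omega) hdp
  have c2 := cop 2 Nat.prime_two (by norm_num) hd2
  have hχp : χ p ^ 3 = 1 := m3 _ cp.of_mul_right_right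
  have hχ2 : χ 2 ^ 3 = 1 := m3 _ c2.of_mul_right_right
  have hχ1 : χ 1 = 1 := by
    have h1 : χ 1 ^ 3 = 1 := m3 1 isCoprime_one_left
    have h2 := m1 1 1
    rw [one_mul] at h2
    have : χ 1 ≠ 0 := by intro h0; rw [h0] at h1; norm_num at h1
    apply mul_left_cancel₀ this
    rw [← h2, mul_one]
  have hχ2' : χ 2 ≠ 1 := by
    intro h1
    have : Fact (Nat.Prime 2) := ⟨Nat.prime_two⟩
    have r := m4 2 c2
    obtain ⟨φ⟩ := exists_hom (AlgebraicClosure (ZMod 2))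
    have r2 := (r φ).2 (by norm_num)
    simp only [Nat.cast_ofNat, h1, map_one, one_mul] at r2
    norm_num at r2
    rw [hom_apply, hom_apply φ t] at r2
    have h20 : (2 : AlgebraicClosure (ZMod 2)) = 0 := by
      have := CharP.cast_eq_zero (AlgebraicClosure (ZMod 2)) 2
      exact_mod_cast this
    obtain ⟨y, hy⟩ : ∃ y, Y = 2 * y + 1 := ⟨Y / 2, by omega⟩
    rw [hy] at r2
    push_cast at r2
    have : (1 : AlgebraicClosure (ZMod 2)) = 0 := by
      linear_combination (-1) * r2 - (3 * y + 1 + 3 * (2 * y + 1) * φ ⟨0, 1⟩) * h20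
    exact one_ne_zero this
  have hχq : ∀ q : ℕ, q.Prime → (q : ℤ) ∣ Y → χ q = 1 := by
    intro q hq hqY
    have : Fact q.Prime := ⟨hq⟩
    have hqp : _root_.Prime (q : ℤ) := Nat.prime_iff_prime_int.1 hq
    have hq3 : q ≠ 3 := by rintro rfl; exact hY3 (by exact_mod_cast hqY)
    have hd : ¬ (q : ℤ) ∣ 2 ^ e * p - Y ^ 2 := by
      intro hh
      have h1 : (q : ℤ) ∣ 2 ^ e * p := by
        have : (2 : ℤ) ^ e * p = (2 ^ e * p - Y ^ 2) + Y * Y := by ring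
        rw [this]
        exact dvd_add hh (hqY.mul_right _)
      rcases hqp.dvd_or_dvd h1 with h2 | h2
      · have h3 := hqp.dvd_of_dvd_pow h2
        have : q ∣ 2 := by exact_mod_cast h3
        have := (Nat.prime_dvd_prime_iff_eq hq Nat.prime_two).1 this
        subst this
        exact hY (by exact_mod_cast hqY)
      · have : q ∣ p := by exact_mod_cast h2
        have := (Nat.prime_dvd_prime_iff_eq hq hp.1).1 this
        subst this
        exact hpY hqY
    have cq := cop q hq hq3 hd
    have r := m4 q cq
    obtain ⟨φ⟩ := exists_hom (AlgebraicClosure (ZMod q))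
    refine OO_cube_one φ (three_ne q hq3) _ (m3 _ cq.of_mul_right_right) ?_
    have hY0 : (Y : AlgebraicClosure (ZMod q)) = 0 := (CharP.intCast_eq_zero_iff _ q Y).2 hqY
    have e1 : φ ⟨t, 3 * Y⟩ = t := by rw [hom_apply]; push_cast; rw [hY0]; ring
    have e2 : φ (star ⟨t, 3 * Y⟩) = t := by rw [star_mk, hom_apply]; push_cast; rw [hY0]; ring
    have ht0 : (t : AlgebraicClosure (ZMod q)) ≠ 0 := by
      rw [Ne, CharP.intCast_eq_zero_iff _ q]
      intro hqt
      apply hd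
      rw [← hnorm, OO_norm]
      simp only
      obtain ⟨x, hx⟩ := hqt
      obtain ⟨y, hy⟩ := hqY
      rw [hx, hy]
      exact ⟨q * x ^ 2 - x * 3 * q * y + 9 * q * y ^ 2, by ring⟩
    obtain ⟨ra, rb⟩ := r φ
    rw [e1, e2] at ra rb
    have hq0 : q % 3 ≠ 0 := fun h => hq3 ((Nat.prime_dvd_prime_iff_eq Nat.prime_three hq).1
        (Nat.dvd_of_mod_eq_zero h)).symm
    rcases (by omega : q % 3 = 1 ∨ q % 3 = 2) with hm | hm
    · have := ra hm
      exact (mul_eq_right₀ (pow_ne_zero _ ht0)).1 this.symm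
    · have := rb hm
      exact (mul_eq_right₀ (pow_ne_zero _ ht0)).1 this.symm
  have hall : ∀ n : ℕ, n ≠ 0 → (n : ℤ) ∣ Y → χ n = 1 := by
    intro n
    induction n using Nat.recOnMul with
    | zero => intro h; exact absurd rfl h
    | one => intro _ _; exact_mod_cast hχ1
    | prime q hq => intro _ hd; exact hχq q hq hd
    | mul a b ha hb =>
      intro h0 hd
      push_cast at hd ⊢
      rw [m1, ha (by rintro rfl; simp at h0) (dvd_of_mul_right_dvd hd),
        hb (by rintro rfl; simp at h0) (dvd_of_mul_left_dvd hd), one_mul]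
  have hY0 : Y.natAbs ≠ 0 := by
    intro h0
    rw [Int.natAbs_eq_zero] at h0
    rw [h0] at hY; simp at hY
  have hYY : χ (Y ^ 2) = 1 := by
    rw [← Int.natAbs_sq, pow_two, m1, hall _ hY0 (Int.natAbs_dvd.2 dvd_rfl), one_mul]
  have hpow : ∀ k : ℕ, χ (2 ^ k) = χ 2 ^ k := by
    intro k
    induction k with
    | zero => simpa using hχ1
    | succ k ih => rw [pow_succ, m1, ih, pow_succ]
  have hprod : χ 2 ^ e * χ p = 1 := by
    rw [← hpow, ← m1, ← hYY, ← m2 (Y ^ 2) 1]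
    congr 1; ring
  refine ⟨χ p, hχp, m4 p cp, ?_, ?_⟩
  · intro h3
    obtain ⟨k, rfl⟩ : ∃ k, e = 3 * k := ⟨e / 3, by omega⟩
    rwa [pow_mul, hχ2, one_pow, one_mul] at hprod
  · intro h3 hc
    obtain ⟨k, rfl⟩ : ∃ k, e = 3 * k + 1 := ⟨e / 3, by omega⟩
    rw [pow_add, pow_mul, hχ2, one_pow, one_mul, hc, mul_one, pow_one] at hprod
    exact hχ2' hprod

lemma rep_forms (N : ℕ) : ∀ a b c : ℤ, a.toNat ≤ N → 0 < a → b ^ 2 - 4 * a * c = -31 → ∀ x y : ℤ,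
    (∃ X Y : ℤ, 4 * (a * x ^ 2 + b * x * y + c * y ^ 2) = X ^ 2 + 31 * Y ^ 2) ∨
    (∃ X Y : ℤ, 8 * (a * x ^ 2 + b * x * y + c * y ^ 2) = X ^ 2 + 31 * Y ^ 2) := by
  induction N with
  | zero => intro a b c h1 h2; omega
  | succ N ih =>
    intro a b c hN ha hd x y
    have key : ∃ m b' : ℤ, b' = b + 2 * a * m ∧ -a ≤ b' ∧ b' < a := by
      have h1 := Int.emod_nonneg (b + a) (b := 2 * a) (by omega)
      have h2 := Int.emod_lt_of_pos (b + a) (b := 2 * a) (by omega)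
      have h3 := Int.mul_ediv_add_emod (b + a) (2 * a)
      refine ⟨-((b + a) / (2 * a)), _, rfl, ?_, ?_⟩ <;> nlinarith
    obtain ⟨m, b', hb', l1, l2⟩ := key
    obtain ⟨c', hc'⟩ : ∃ c', c' = a * m ^ 2 + b * m + c := ⟨_, rfl⟩
    obtain ⟨x', hx'⟩ : ∃ x', x' = x - m * y := ⟨_, rfl⟩
    have hval : a * x ^ 2 + b * x * y + c * y ^ 2 = a * x' ^ 2 + b' * x' * y + c' * y ^ 2 := by
      rw [hb', hc', hx']; ring
    have hd' : b' ^ 2 - 4 * a * c' = -31 := by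
      rw [hb', hc']; linear_combination hd
    rw [hval]
    have hc0 : 0 < c' := by nlinarith [sq_nonneg b']
    by_cases hlt : c' < a
    · have := ih c' (-b') a (by omega) hc0 (by linear_combination hd') (-y) x'
      have e : c' * (-y) ^ 2 + -b' * (-y) * x' + a * x' ^ 2
        = a * x' ^ 2 + b' * x' * y + c' * y ^ 2 := by ring
      rwa [e] at this
    · push Not at hlt
      have ha3 : a ≤ 3 := by nlinarith
      have hcom : (4 * a) * (a * x' ^ 2 + b' * x' * y + c' * y ^ 2)
          = (2 * a * x' + b' * y) ^ 2 + 31 * y ^ 2 := by linear_combination -y ^ 2 * hd'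
      interval_cases a
      · left; exact ⟨_, _, hcom⟩
      · right; exact ⟨_, _, hcom⟩
      · exfalso
        have : -3 ≤ b' := l1
        interval_cases b' <;> omega

lemma rep_prime (p : ℕ) (hp2 : p % 2 = 1) (s : ℤ) (hs : (p : ℤ) ∣ s ^ 2 + 31) :
    (∃ X Y : ℤ, 4 * (p : ℤ) = X ^ 2 + 31 * Y ^ 2) ∨
    (∃ X Y : ℤ, 8 * (p : ℤ) = X ^ 2 + 31 * Y ^ 2) := by
  have key : ∃ b : ℤ, (p : ℤ) ∣ b ^ 2 + 31 ∧ b % 2 = 1 := by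
    rcases Int.emod_two_eq_zero_or_one s with h | h
    · refine ⟨s + p, ?_, by omega⟩
      have : (s + p) ^ 2 + 31 = (s ^ 2 + 31) + p * (2 * s + p) := by ring
      rw [this]
      exact dvd_add hs (dvd_mul_right _ _)
    · exact ⟨s, hs, h⟩
  obtain ⟨b, hb, hb2⟩ := key
  have h4 : (4 : ℤ) ∣ b ^ 2 + 31 := by
    obtain ⟨k, rfl⟩ : ∃ k, b = 2 * k + 1 := ⟨b / 2, by omega⟩
    exact ⟨k ^ 2 + k + 8, by ring⟩
  have hcop : IsCoprime (4 : ℤ) (p : ℤ) := by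
    have : Nat.Coprime 4 p := by
      have : Nat.Coprime (2 ^ 2) p :=
        Nat.Coprime.pow_left 2 ((Nat.coprime_two_left).2 (Nat.odd_iff.2 hp2))
      exact this
    exact_mod_cast Nat.isCoprime_iff_coprime.2 this
  obtain ⟨c, hc⟩ := hcop.mul_dvd h4 hb
  have := rep_forms p p b c (by simp) (by omega) (by linear_combination hc) 1 0
  simpa using this

lemma rep_up (m X Y : ℤ) (h : 4 * m = X ^ 2 + 31 * Y ^ 2) (hY : ¬ (2 : ℤ) ∣ Y) :
    ∃ X' Y' : ℤ, ¬ (2 : ℤ) ∣ Y' ∧ 4 * (8 * m) = X' ^ 2 + 31 * Y' ^ 2 := by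
  obtain ⟨y, rfl⟩ : ∃ k, Y = 2 * k + 1 := ⟨Y / 2, by omega⟩
  have hX : X % 2 = 1 := by
    rcases Int.emod_two_eq_zero_or_one X with h1 | h1
    · exfalso
      obtain ⟨x, rfl⟩ : ∃ k, X = 2 * k := ⟨X / 2, by omega⟩
      ring_nf at h; omega
    · exact h1
  obtain ⟨x, rfl⟩ : ∃ k, X = 2 * k + 1 := ⟨X / 2, by omega⟩
  by_cases hc : (2 : ℤ) ∣ x + y
  · exact ⟨x - 31 * y - 15, x + y + 1, by omega, by linear_combination 8 * h⟩
  · exact ⟨x + 31 * y + 16, y - x, by omega, by linear_combination 8 * h⟩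

lemma rep_start (p X Y : ℤ) (hp : p % 2 = 1) (h : 4 * p = X ^ 2 + 31 * Y ^ 2) :
    ∃ X' Y' : ℤ, ¬ (2 : ℤ) ∣ Y' ∧ 4 * (2 ^ 3 * p) = X' ^ 2 + 31 * Y' ^ 2 := by
  by_cases hY : (2 : ℤ) ∣ Y
  · obtain ⟨y, rfl⟩ := hY
    have hX : X % 2 = 0 := by
      rcases Int.emod_two_eq_zero_or_one X with h1 | h1
      · exact h1
      · exfalso
        obtain ⟨x, rfl⟩ : ∃ k, X = 2 * k + 1 := ⟨X / 2, by omega⟩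
        ring_nf at h; omega
    obtain ⟨x, rfl⟩ : ∃ k, X = 2 * k := ⟨X / 2, by omega⟩
    refine ⟨x - 31 * y, x + y, ?_, by linear_combination 8 * h⟩
    intro ⟨k, hk⟩
    obtain rfl : x = 2 * k - y := by omega
    ring_nf at h; omega
  · have := rep_up p X Y h hY
    norm_num at this ⊢
    exact this

lemma rep_odd (p X Y : ℤ) (hp : p % 2 = 1) (h : 8 * p = X ^ 2 + 31 * Y ^ 2) :
    ¬ (2 : ℤ) ∣ Y := by
  rintro ⟨y, rfl⟩
  have hX : X % 2 = 0 := by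
    rcases Int.emod_two_eq_zero_or_one X with h1 | h1
    · exact h1
    · exfalso
      obtain ⟨x, rfl⟩ : ∃ k, X = 2 * k + 1 := ⟨X / 2, by omega⟩
      ring_nf at h; omega
  obtain ⟨x, rfl⟩ : ∃ k, X = 2 * k := ⟨X / 2, by omega⟩
  have h' : 2 * p = x ^ 2 + 31 * y ^ 2 := by linarith
  rcases Int.even_or_odd' x with ⟨k, rfl | rfl⟩ <;> rcases Int.even_or_odd' y with ⟨l, rfl | rfl⟩ <;>
    ring_nf at h' <;> omega

lemma rep_three (m X Y : ℤ) (hm : m % 3 = 2) (h : 4 * m = X ^ 2 + 31 * Y ^ 2) :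
    ¬ (3 : ℤ) ∣ X ∧ ¬ (3 : ℤ) ∣ Y := by
  have hX : X ^ 2 % 3 = 0 ∧ X % 3 = 0 ∨ X ^ 2 % 3 = 1 ∧ ¬ X % 3 = 0 := by
    rcases (by omega : X % 3 = 0 ∨ X % 3 = 1 ∨ X % 3 = 2) with h | h | h <;>
      simp [pow_two, Int.mul_emod, h]
  have hY : Y ^ 2 % 3 = 0 ∧ Y % 3 = 0 ∨ Y ^ 2 % 3 = 1 ∧ ¬ Y % 3 = 0 := by
    rcases (by omega : Y % 3 = 0 ∨ Y % 3 = 1 ∨ Y % 3 = 2) with h | h | h <;>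
      simp [pow_two, Int.mul_emod, h]
  omega

lemma choose_e (p : ℤ) (hp : p % 3 ≠ 0) (e : ℕ) (X Y : ℤ) (he : e ≠ 0) (hY : ¬ (2 : ℤ) ∣ Y)
    (h : 4 * (2 ^ e * p) = X ^ 2 + 31 * Y ^ 2) :
    ∃ (e' : ℕ) (X' Y' : ℤ), e' % 3 = e % 3 ∧ e' ≠ 0 ∧ ¬ (2 : ℤ) ∣ Y' ∧ ¬ (3 : ℤ) ∣ X' ∧
      ¬ (3 : ℤ) ∣ Y' ∧ 4 * 2 ^ e' * p = X' ^ 2 + 31 * Y' ^ 2 := by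
  have h0 : (2 ^ e * p) % 3 ≠ 0 := by
    intro h0
    rcases Int.prime_three.dvd_or_dvd (Int.dvd_of_emod_eq_zero h0) with h1 | h1
    · have := Int.prime_three.dvd_of_dvd_pow h1
      omega
    · omega
  by_cases h2 : (2 ^ e * p) % 3 = 2
  · obtain ⟨a, b⟩ := rep_three _ _ _ h2 h
    exact ⟨e, X, Y, rfl, he, hY, a, b, by linear_combination h⟩
  · obtain ⟨X', Y', hY', h'⟩ := rep_up _ _ _ h hY
    obtain ⟨a, b⟩ := rep_three _ _ _ (by omega) h'
    exact ⟨e + 3, X', Y', by omega, by omega, hY', a, b, by rw [pow_add]; linear_combination h'⟩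

lemma roots_exist (E : Type) [Field E] [IsAlgClosed E] :
    ∃ a b c : E, a + b + c = 0 ∧ a * b + b * c + c * a = 1 ∧ a * b * c = -1 := by
  have hd : (Polynomial.C (1 : E) * Polynomial.X ^ 3 + Polynomial.C 0 * Polynomial.X ^ 2
      + Polynomial.C 1 * Polynomial.X + Polynomial.C 1).degree = 3 :=
    Polynomial.degree_cubic one_ne_zero
  obtain ⟨a, ha⟩ := IsAlgClosed.exists_root _ (by rw [hd]; norm_num)
  simp [Polynomial.IsRoot] at ha
  have hd : (Polynomial.C (1 : E) * Polynomial.X ^ 2 + Polynomial.C a * Polynomial.X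
      + Polynomial.C (a ^ 2 + 1)).degree = 2 := Polynomial.degree_quadratic one_ne_zero
  obtain ⟨b, hb⟩ := IsAlgClosed.exists_root _ (by rw [hd]; norm_num)
  simp [Polynomial.IsRoot] at hb
  exact ⟨a, b, -a - b, by ring, by linear_combination -hb, by linear_combination ha - a * hb⟩

lemma disc_sq {E : Type} [Field E] {a b c : E} (h1 : a + b + c = 0)
    (h2 : a * b + b * c + c * a = 1) (h3 : a * b * c = -1) :
    ((a - b) * (b - c) * (c - a)) ^ 2 = -31 := by
  obtain rfl : c = -a - b := by linear_combination h1
  generalize hf : a * b + b * (-a - b) + (-a - b) * a = f at h2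
  generalize hg : a * b * (-a - b) = g at h3
  have : ((a - b) * (b - (-a - b)) * (-a - b - a)) ^ 2 = -4 * f ^ 3 - 27 * g ^ 2 := by
    rw [← hf, ← hg]; ring
  rw [this, h2, h3]; norm_num

lemma rec_formula {E : Type} [Field E] {a b c : E} (e1 : a + b + c = 0)
    (e2 : a * b + b * c + c * a = 1) (e3 : a * b * c = -1) (u : ℕ → ℤ)
    (h0 : u 0 = 0) (h1 : u 1 = -1) (h2 : u 2 = -1)
    (hrec : ∀ n, u (n + 3) = -u (n + 1) - u n) (n : ℕ) :
    ((a - b) * (b - c) * (c - a)) * (u n : E)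
      = -(a ^ (n + 3) * (b - c) + b ^ (n + 3) * (c - a) + c ^ (n + 3) * (a - b))
      := by
  have ra : a ^ 3 + a + 1 = 0 := by linear_combination a ^ 2 * e1 - a * e2 + e3
  have rb : b ^ 3 + b + 1 = 0 := by linear_combination b ^ 2 * e1 - b * e2 + e3
  have rc : c ^ 3 + c + 1 = 0 := by linear_combination c ^ 2 * e1 - c * e2 + e3
  induction n using Nat.strong_induction_on with
  | _ n ih =>
    match n, ih with
    | 0, _ =>
      rw [h0]; push_cast
      linear_combination -((a - b) * (b - c) * (c - a)) * e1
    | 1, _ =>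
      rw [h1]; push_cast
      linear_combination ((a - b) * (b - c) * (c - a)) * (-(a + b + c) * e1 + e2)
    | 2, _ =>
      rw [h2]; push_cast
      linear_combination ((a - b) * (b - c) * (c - a)) *
        ((-(a + b + c) ^ 2 + 2 * (a * b + b * c + c * a)) * e1 - e3)
    | n + 3, ih =>
      have i1 := ih (n + 1) (by omega)
      have i0 := ih n (by omega)
      rw [hrec]; push_cast
      have pa : a ^ (n + 3 + 3) = -a ^ (n + 1 + 3) - a ^ (n + 3) := by
        linear_combination a ^ (n + 3) * ra
      have pb : b ^ (n + 3 + 3) = -b ^ (n + 1 + 3) - b ^ (n + 3) := by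
        linear_combination b ^ (n + 3) * rb
      have pc : c ^ (n + 3 + 3) = -c ^ (n + 1 + 3) - c ^ (n + 3) := by
        linear_combination c ^ (n + 3) * rc
      rw [pa, pb, pc]
      linear_combination -i1 - i0

lemma perm6 {E : Type} [Field E] (p : ℕ) [Fact p.Prime] [CharP E p] {a b c : E}
    (e1 : a + b + c = 0)
    (e2 : a * b + b * c + c * a = 1) (e3 : a * b * c = -1)
    (hV : (a - b) * (b - c) * (c - a) ≠ 0) :
    (a ^ p = a ∧ b ^ p = b ∧ c ^ p = c) ∨ (a ^ p = b ∧ b ^ p = c ∧ c ^ p = a) ∨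
    (a ^ p = c ∧ b ^ p = a ∧ c ^ p = b) ∨ (a ^ p = a ∧ b ^ p = c ∧ c ^ p = b) ∨
    (a ^ p = c ∧ b ^ p = b ∧ c ^ p = a) ∨ (a ^ p = b ∧ b ^ p = a ∧ c ^ p = c) := by
  have root (x : E) (hx : x ^ 3 + x + 1 = 0) : x ^ p = a ∨ x ^ p = b ∨ x ^ p = c := by
    have h := congrArg (frobenius E p) hx
    simp only [map_add, map_pow, map_one, map_zero, frobenius_def] at h
    generalize x ^ p = z at h
    have : (z - a) * ((z - b) * (z - c)) = 0 := by
      linear_combination h - z ^ 2 * e1 + z * e2 - e3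
    rcases mul_eq_zero.1 this with h | h
    · left; linear_combination h
    · rcases mul_eq_zero.1 h with h | h
      · right; left; linear_combination h
      · right; right; linear_combination h
  have ra := root a (by linear_combination a ^ 2 * e1 - a * e2 + e3)
  have rb := root b (by linear_combination b ^ 2 * e1 - b * e2 + e3)
  have hs : a ^ p + b ^ p + c ^ p = 0 := by
    have h := congrArg (frobenius E p) e1
    simpa only [map_add, map_zero, frobenius_def] using h
  have hab : a ^ p ≠ b ^ p := by
    intro h
    have : a = b := frobenius_inj E p h
    apply hV; rw [this]; ring
  generalize a ^ p = A at *
  generalize b ^ p = B at *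
  generalize c ^ p = C at *
  rcases ra with rfl | rfl | rfl <;> rcases rb with rfl | rfl | rfl
  · exact absurd rfl hab
  · exact Or.inl ⟨rfl, rfl, by linear_combination hs - e1⟩
  · exact Or.inr (Or.inr (Or.inr (Or.inl ⟨rfl, rfl, by linear_combination hs - e1⟩)))
  · exact Or.inr (Or.inr (Or.inr (Or.inr (Or.inr ⟨rfl, rfl, by linear_combination hs - e1⟩))))
  · exact absurd rfl hab
  · exact Or.inr (Or.inl ⟨rfl, rfl, by linear_combination hs - e1⟩)
  · exact Or.inr (Or.inr (Or.inl ⟨rfl, rfl, by linear_combination hs - e1⟩))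
  · exact Or.inr (Or.inr (Or.inr (Or.inr (Or.inl ⟨rfl, rfl, by linear_combination hs - e1⟩))))
  · exact absurd rfl hab

lemma u_iff {E : Type} [Field E] (p : ℕ) [hp : Fact p.Prime] [CharP E p] {a b c : E}
    (e1 : a + b + c = 0)
    (e2 : a * b + b * c + c * a = 1) (e3 : a * b * c = -1)
    (hV : (a - b) * (b - c) * (c - a) ≠ 0) (u : ℕ → ℤ)
    (h0 : u 0 = 0) (h1 : u 1 = -1) (h2 : u 2 = -1)
    (hrec : ∀ n, u (n + 3) = -u (n + 1) - u n) :
    (p : ℤ) ∣ u (p - 1) ↔ (a ^ p = a ∧ b ^ p = b ∧ c ^ p = c) := by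
  have hf := rec_formula e1 e2 e3 u h0 h1 h2 hrec (p - 1)
  have hp1 : p - 1 + 3 = p + 2 := by have := hp.1.two_le; omega
  rw [hp1, pow_add, pow_add, pow_add] at hf
  rw [← CharP.intCast_eq_zero_iff E p, ← mul_right_inj' hV, hf, mul_zero, neg_eq_zero]
  have a0 : a ≠ 0 := by rintro rfl; simp at e3
  have b0 : b ≠ 0 := by rintro rfl; simp at e3
  have c0 : c ≠ 0 := by rintro rfl; simp at e3
  have hab : a - b ≠ 0 := by intro h; apply hV; rw [h]; ring
  have hbc : b - c ≠ 0 := by intro h; apply hV; rw [h]; ring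
  have hca : c - a ≠ 0 := by intro h; apply hV; rw [h]; ring
  have ra : a ^ 3 + a + 1 = 0 := by linear_combination a ^ 2 * e1 - a * e2 + e3
  have rb : b ^ 3 + b + 1 = 0 := by linear_combination b ^ 2 * e1 - b * e2 + e3
  have rc : c ^ 3 + c + 1 = 0 := by linear_combination c ^ 2 * e1 - c * e2 + e3
  constructor
  · intro h
    have hperm := perm6 p e1 e2 e3 hV
    generalize a ^ p = A at *
    generalize b ^ p = B at *
    generalize c ^ p = C at *
    rcases hperm with h' | ⟨hA, hB, hC⟩ | ⟨hA, hB, hC⟩ | ⟨hA, hB, hC⟩ | ⟨hA, hB, hC⟩ | ⟨hA, hB, hC⟩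
    · exact h'
    · exfalso
      rw [hA, hB, hC] at h
      apply one_ne_zero (α := E)
      linear_combination h - (a * b + b * c + c * a + 1) * e2 + 3 * (a * b * c) * e1
    · exfalso
      rw [hA, hB, hC] at h
      apply one_ne_zero (α := E)
      linear_combination -h - (a * b + b * c + c * a + 1) * e2 + 3 * (a * b * c) * e1
    · exfalso
      rw [hA, hB, hC] at h
      apply mul_ne_zero hbc a0
      linear_combination -h + (b - c) * ra - (b - c) * e3
    · exfalso
      rw [hA, hB, hC] at h
      apply mul_ne_zero hca b0
      linear_combination -h + (c - a) * rb - (c - a) * e3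
    · exfalso
      rw [hA, hB, hC] at h
      apply mul_ne_zero hab c0
      linear_combination -h + (a - b) * rc - (a - b) * e3
  · rintro ⟨ha, hb, hc⟩
    rw [ha, hb, hc]
    linear_combination -((a - b) * (b - c) * (c - a)) * e1

lemma int_pow_p {E : Type} [Field E] (p : ℕ) [hp : Fact p.Prime] [CharP E p] (n : ℤ) :
    (n : E) ^ p = n := by
  rw [← frobenius_def, map_intCast]

lemma frob_iff (p : ℕ) [hp : Fact p.Prime] (hp3 : 3 < p) {a b c : AlgebraicClosure (ZMod p)}
    (e1 : a + b + c = 0)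
    (e2 : a * b + b * c + c * a = 1) (e3 : a * b * c = -1)
    (hV : (a - b) * (b - c) * (c - a) ≠ 0) (X Y t : ℤ)
    (hXY : (a - b) * (b - c) * (c - a) * Y = X) (hY : (Y : AlgebraicClosure (ZMod p)) ≠ 0)
    (ht : 2 * t = X + 3 * Y) (z : OO) (hz : z ^ 3 = 1) (hr : Rec ⟨t, 3 * Y⟩ z p) :
    z = 1 ↔ (a ^ p = a ∧ b ^ p = b ∧ c ^ p = c) := by
  obtain ⟨φ⟩ := exists_hom (AlgebraicClosure (ZMod p))
  have h3 := three_ne p (by omega)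
  have h2 : (2 : AlgebraicClosure (ZMod p)) ≠ 0 := by
    have := cast_ne p 2 (fun hd => by have := Nat.le_of_dvd (by norm_num) hd; omega)
    exact_mod_cast this
  have hw := hom_omega φ
  obtain ⟨r1, r2⟩ := hr φ
  have hz1 : z = 1 ↔ φ z = 1 := ⟨fun h => by rw [h, map_one], OO_cube_one φ h3 z hz⟩
  rw [hz1]
  have ht' : (2 : AlgebraicClosure (ZMod p)) * t = X + 3 * Y := by exact_mod_cast congrArg _ ht
  have s1 : 2 * φ ⟨t, 3 * Y⟩ = Y * ((a - b) * (b - c) * (c - a) + 3 * (1 + 2 * φ ⟨0, 1⟩)) := by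
    rw [hom_apply]; push_cast
    linear_combination ht' - hXY
  have s2 : 2 * φ (star ⟨t, 3 * Y⟩)
      = Y * ((a - b) * (b - c) * (c - a) - 3 * (1 + 2 * φ ⟨0, 1⟩)) := by
    rw [star_mk, hom_apply]; push_cast
    linear_combination ht' - hXY
  generalize φ ⟨t, 3 * Y⟩ = f at *
  generalize φ (star ⟨t, 3 * Y⟩) = f' at *
  generalize φ z = d at *
  generalize φ ⟨0, 1⟩ = w at *
  have w3 : w ^ 3 = 1 := by linear_combination (w - 1) * hw
  have w1 : w ≠ 1 := by rintro rfl; apply h3; linear_combination hw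
  obtain ⟨L1, hL1⟩ : ∃ L, L = a + w * b + w ^ 2 * c := ⟨_, rfl⟩
  obtain ⟨L2, hL2⟩ : ∃ L, L = a + w ^ 2 * b + w * c := ⟨_, rfl⟩
  have hL : L1 * L2 = -3 := by
    rw [hL1, hL2]
    linear_combination (b ^ 2 + c ^ 2) * w3 + (a * b + a * c + b * c * (w ^ 2 - w + 1)) * hw
      + (a + b + c) * e1 - 3 * e2
  have hL0 : L1 * L2 ≠ 0 := by rw [hL]; exact neg_ne_zero.2 h3
  have ra : a ^ 3 + a + 1 = 0 := by linear_combination a ^ 2 * e1 - a * e2 + e3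
  have hsum : L1 + L2 = 3 * a := by rw [hL1, hL2]; linear_combination (b + c) * hw - e1
  have hdif : L1 - L2 = (1 + 2 * w) * (b - c) := by
    rw [hL1, hL2]; linear_combination -(b - c) * hw
  have hbc : b * c = 1 + a ^ 2 := by linear_combination e2 - a * e1
  have hV' : (a - b) * (b - c) * (c - a) = -(b - c) * (3 * a ^ 2 + 1) := by
    linear_combination (b - c) * (e2 - 2 * hbc)
  have hs : L1 ^ 3 + L2 ^ 3 = -27 := by
    have : L1 ^ 3 + L2 ^ 3 = (L1 + L2) ^ 3 - 3 * (L1 * L2) * (L1 + L2) := by ring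
    rw [this, hsum, hL]; linear_combination 27 * ra
  have hd : L1 ^ 3 - L2 ^ 3 = -3 * (1 + 2 * w) * ((a - b) * (b - c) * (c - a)) := by
    have : L1 ^ 3 - L2 ^ 3 = (L1 - L2) * ((L1 + L2) ^ 2 - L1 * L2) := by ring
    rw [this, hsum, hL, hdif, hV']; ring
  have q1 : Y * L1 ^ 3 = -(3 * (1 + 2 * w)) * f' := by
    apply mul_left_cancel₀ h2
    linear_combination Y * hs + Y * hd + (3 * (1 + 2 * w)) * s2 - 36 * Y * hw
  have q2 : Y * L2 ^ 3 = (3 * (1 + 2 * w)) * f := by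
    apply mul_left_cancel₀ h2
    linear_combination Y * hs - Y * hd - (3 * (1 + 2 * w)) * s1 - 36 * Y * hw
  have hVp : (a ^ p - b ^ p) * (b ^ p - c ^ p) * (c ^ p - a ^ p) = (a - b) * (b - c) * (c - a) := by
    have h := congrArg (fun x => x ^ p) hXY
    simp only [mul_pow, int_pow_p, sub_pow_char] at h
    apply mul_right_cancel₀ hY
    rw [h, hXY]
  have hperm := perm6 p e1 e2 e3 hV
  have main : (a ^ p = a ∧ b ^ p = b ∧ c ^ p = c → d = 1) ∧
      (a ^ p = b ∧ b ^ p = c ∧ c ^ p = a → w * d = 1) ∧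
      (a ^ p = c ∧ b ^ p = a ∧ c ^ p = b → d = w) := by
    have hodd : p % 2 = 1 := (hp.1.eq_two_or_odd).resolve_left (by omega)
    have hm0 : p % 3 ≠ 0 := fun h => by
      have := (Nat.prime_dvd_prime_iff_eq Nat.prime_three hp.1).1 (Nat.dvd_of_mod_eq_zero h)
      omega
    have P1 : L1 ^ p = a ^ p + w ^ p * b ^ p + (w ^ p) ^ 2 * c ^ p := by
      rw [hL1, ← frobenius_def]; simp only [map_add, map_mul, map_pow, frobenius_def]
    have P2 : L2 ^ p = a ^ p + (w ^ p) ^ 2 * b ^ p + w ^ p * c ^ p := by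
      rw [hL2, ← frobenius_def]; simp only [map_add, map_mul, map_pow, frobenius_def]
    rcases (by omega : p % 3 = 1 ∨ p % 3 = 2) with hm | hm
    · have r := r1 hm
      obtain ⟨k, hk⟩ : ∃ k, p = 3 * k + 1 := ⟨p / 3, by omega⟩
      have hk' : (p - 1) / 3 = k := by omega
      rw [hk'] at r
      have hev : Even k := by rw [Nat.even_iff]; omega
      have t1 : Y ^ k * (L1 ^ 3) ^ k = (3 * (1 + 2 * w)) ^ k * f' ^ k := by
        rw [← mul_pow, q1, mul_pow, hev.neg_pow]
      have t2 : Y ^ k * (L2 ^ 3) ^ k = (3 * (1 + 2 * w)) ^ k * f ^ k := by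
        rw [← mul_pow, q2, mul_pow]
      have t3 : (L2 ^ 3) ^ k = d * (L1 ^ 3) ^ k := by
        apply mul_left_cancel₀ (pow_ne_zero k hY)
        rw [t2, r]; linear_combination -d * t1
      have t4 : L2 ^ p * L1 = d * (L1 ^ p * L2) := by
        rw [pow_q3 L2 hk, pow_q3 L1 hk, t3]; ring
      have hwp : w ^ p = w := by rw [pow_q3 w hk, w3]; ring
      rw [hwp] at P1 P2
      refine ⟨?_, ?_, ?_⟩ <;> rintro ⟨hA, hB, hC⟩ <;> rw [hA, hB, hC] at P1 P2
      · rw [← hL1] at P1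
        rw [← hL2] at P2
        rw [P1, P2] at t4
        apply mul_right_cancel₀ hL0
        linear_combination -t4
      · have P1' : L1 ^ p = w ^ 2 * L1 := by
          rw [P1, hL1]; linear_combination (-b - w * c) * w3
        have P2' : L2 ^ p = w * L2 := by
          rw [P2, hL2]; linear_combination -b * w3
        rw [P1', P2'] at t4
        apply mul_right_cancel₀ hL0
        linear_combination -w ^ 2 * t4 + (1 - w * d) * (L1 * L2) * w3
      · have P1' : L1 ^ p = w * L1 := by
          rw [P1, hL1]; linear_combination -c * w3
        have P2' : L2 ^ p = w ^ 2 * L2 := by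
          rw [P2, hL2]; linear_combination (-c - w * b) * w3
        rw [P1', P2'] at t4
        apply mul_right_cancel₀ hL0
        linear_combination -w ^ 2 * t4 + (w - d) * (L1 * L2) * w3
    · have r := r2 hm
      obtain ⟨k, hk⟩ : ∃ k, p + 1 = 3 * k := ⟨(p + 1) / 3, by omega⟩
      have hk' : (p + 1) / 3 = k := by omega
      rw [hk'] at r
      have hev : Even k := by rw [Nat.even_iff]; omega
      have t1 : Y ^ k * (L1 ^ 3) ^ k = (3 * (1 + 2 * w)) ^ k * f' ^ k := by
        rw [← mul_pow, q1, mul_pow, hev.neg_pow]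
      have t2 : Y ^ k * (L2 ^ 3) ^ k = (3 * (1 + 2 * w)) ^ k * f ^ k := by
        rw [← mul_pow, q2, mul_pow]
      have t3 : (L1 ^ 3) ^ k = d * (L2 ^ 3) ^ k := by
        apply mul_left_cancel₀ (pow_ne_zero k hY)
        rw [t1, r]; linear_combination -d * t2
      have t4 : L1 ^ p * L1 = d * (L2 ^ p * L2) := by
        rw [← pow_succ, ← pow_succ, hk, pow_mul, pow_mul, t3]
      have hwp : w ^ p = w ^ 2 := by
        have hk2 : p = 3 * (k - 1) + 2 := by omega
        rw [pow_q3 w hk2, w3]; ring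
      rw [hwp] at P1 P2
      refine ⟨?_, ?_, ?_⟩ <;> rintro ⟨hA, hB, hC⟩ <;> rw [hA, hB, hC] at P1 P2
      · have P1' : L1 ^ p = L2 := by
          rw [P1, hL2]; linear_combination c * w * w3
        have P2' : L2 ^ p = L1 := by
          rw [P2, hL1]; linear_combination b * w * w3
        rw [P1', P2'] at t4
        apply mul_right_cancel₀ hL0
        linear_combination -t4
      · have P1' : L1 ^ p = w * L2 := by
          rw [P1, hL2]; linear_combination (a * w - b) * w3
        have P2' : L2 ^ p = w ^ 2 * L1 := by
          rw [P2, hL1]; linear_combination (-b) * w3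
        rw [P1', P2'] at t4
        apply mul_right_cancel₀ hL0
        linear_combination -w ^ 2 * t4 + (1 - w * d) * (L1 * L2) * w3
      · have P1' : L1 ^ p = w ^ 2 * L2 := by
          rw [P1, hL2]; linear_combination (-c) * w3
        have P2' : L2 ^ p = w * L1 := by
          rw [P2, hL1]; linear_combination (a * w - c) * w3
        rw [P1', P2'] at t4
        apply mul_right_cancel₀ hL0
        linear_combination -w ^ 2 * t4 + (w - d) * (L1 * L2) * w3
  constructor
  · intro hd1
    rcases hperm with h | h | h | ⟨hA, hB, hC⟩ | ⟨hA, hB, hC⟩ | ⟨hA, hB, hC⟩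
    · exact h
    · exfalso
      have := main.2.1 h
      rw [hd1, mul_one] at this
      exact w1 this
    · exfalso
      have := main.2.2 h
      rw [hd1] at this
      exact w1 this.symm
    all_goals
      exfalso
      rw [hA, hB, hC] at hVp
      apply mul_ne_zero h2 hV
      linear_combination -hVp
  · exact main.1

lemma main_aux (p : ℕ) [hp : Fact p.Prime] (hp3 : 3 < p)
    {a b c : AlgebraicClosure (ZMod p)}
    (e1 : a + b + c = 0)
    (e2 : a * b + b * c + c * a = 1) (e3 : a * b * c = -1)
    (hV : (a - b) * (b - c) * (c - a) ≠ 0) (e : ℕ) (X Y : ℤ) (he : e ≠ 0) (hY : ¬ (2 : ℤ) ∣ Y)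
    (h : 4 * (2 ^ e * (p : ℤ)) = X ^ 2 + 31 * Y ^ 2) :
    (e % 3 = 0 → (a ^ p = a ∧ b ^ p = b ∧ c ^ p = c)) ∧
    (e % 3 = 1 → ¬ (a ^ p = a ∧ b ^ p = b ∧ c ^ p = c)) := by
  have hm0 : (p : ℤ) % 3 ≠ 0 := fun h => by
    have := (Nat.prime_dvd_prime_iff_eq Nat.prime_three hp.1).1 (Nat.dvd_of_mod_eq_zero (by omega))
    omega
  obtain ⟨e', X, Y, hee, he', hY2, hX3, hY3, h'⟩ := choose_e p hm0 e X Y he hY h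
  have hpp : _root_.Prime (p : ℤ) := Nat.prime_iff_prime_int.1 hp.1
  have hpY : ¬ (p : ℤ) ∣ Y := by
    intro hd
    have hX : (p : ℤ) ∣ X := by
      apply hpp.dvd_of_dvd_pow (n := 2)
      have : X ^ 2 = p * (4 * 2 ^ e') - Y * (31 * Y) := by linear_combination -h'
      rw [this]
      exact dvd_sub (dvd_mul_right _ _) (hd.mul_right _)
    obtain ⟨x, hx⟩ := hX
    obtain ⟨y, hy⟩ := hd
    have h1 : (p : ℤ) ∣ 2 ^ (e' + 2) := by
      refine ⟨x ^ 2 + 31 * y ^ 2, ?_⟩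
      apply mul_left_cancel₀ hpp.ne_zero
      rw [hx, hy] at h'
      linear_combination h'
    have h2 := hpp.dvd_of_dvd_pow h1
    have h3 := Int.le_of_dvd (by norm_num) h2
    omega
  have hYE : (Y : AlgebraicClosure (ZMod p)) ≠ 0 := by
    rwa [Ne, CharP.intCast_eq_zero_iff _ p]
  have hcast : (X : AlgebraicClosure (ZMod p)) ^ 2 + 31 * Y ^ 2 = 0 := by
    have : ((4 * 2 ^ e' * p : ℤ) : AlgebraicClosure (ZMod p)) = ((X ^ 2 + 31 * Y ^ 2 : ℤ) : _) := by
      rw [h']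
    push_cast at this
    rw [CharP.cast_eq_zero, mul_zero] at this
    exact this.symm
  have hV2 := disc_sq e1 e2 e3
  have key : ∃ Y' : ℤ, (a - b) * (b - c) * (c - a) * Y' = X ∧ (Y' = Y ∨ Y' = -Y) := by
    have : ((a - b) * (b - c) * (c - a) * Y - X) * ((a - b) * (b - c) * (c - a) * Y + X) = 0 := by
      linear_combination Y ^ 2 * hV2 - hcast
    rcases mul_eq_zero.1 this with h | h
    · exact ⟨Y, by linear_combination h, Or.inl rfl⟩
    · exact ⟨-Y, by push_cast; linear_combination -h, Or.inr rfl⟩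
  obtain ⟨Y', k1, k2⟩ := key
  have hY2' : ¬ (2 : ℤ) ∣ Y' := by rcases k2 with rfl | rfl <;> simpa using hY2
  have hY3' : ¬ (3 : ℤ) ∣ Y' := by rcases k2 with rfl | rfl <;> simpa using hY3
  have hYE' : (Y' : AlgebraicClosure (ZMod p)) ≠ 0 := by
    rcases k2 with rfl | rfl <;> simpa using hYE
  have h'' : 4 * 2 ^ e' * (p : ℤ) = X ^ 2 + 31 * Y' ^ 2 := by
    rcases k2 with rfl | rfl <;> rw [h']; ring
  have hX2 : X % 2 = 1 := by
    rcases Int.emod_two_eq_zero_or_one X with h1 | h1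
    · exfalso
      obtain ⟨x, rfl⟩ : ∃ k, X = 2 * k := ⟨X / 2, by omega⟩
      obtain ⟨y, rfl⟩ : ∃ k, Y' = 2 * k + 1 := ⟨Y' / 2, by omega⟩
      generalize (2 : ℤ) ^ e' * p = m at *
      have : 4 * (2 ^ e' * (p : ℤ) - x ^ 2 - 31 * (y ^ 2 + y)) = 31 := by linear_combination h''
      omega
    · exact h1
  obtain ⟨t, ht⟩ : ∃ t, 2 * t = X + 3 * Y' := ⟨(X + 3 * Y') / 2, by omega⟩
  obtain ⟨z, z1, z2, z3, z4⟩ := chi_exists p hp3 e' X Y' t ht he' hY2' hX3 hY3' h''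
  have hf := frob_iff p hp3 e1 e2 e3 hV X Y' t k1 hYE' ht z z1 z2
  constructor
  · intro h; exact hf.1 (z3 (by omega))
  · intro h hh; exact z4 (by omega) (hf.2 hh)

lemma sqrt_exists (p : ℕ) [hp : Fact p.Prime] (v : AlgebraicClosure (ZMod p)) (hv : v ^ p = v)
    (h : v ^ 2 = -31) : ∃ s : ℤ, (p : ℤ) ∣ s ^ 2 + 31 := by
  have : ∃ s : ZMod p, algebraMap (ZMod p) (AlgebraicClosure (ZMod p)) s = v := by
    have hm := (Subfield.mem_bot_iff_pow_eq_self (AlgebraicClosure (ZMod p)) p).2 hv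
    rw [← ZMod.fieldRange_castHom_eq_bot p] at hm
    obtain ⟨s, hs⟩ := hm
    refine ⟨s, ?_⟩
    rw [← hs]
    congr 1
    exact Subsingleton.elim _ _
  obtain ⟨s, hs⟩ := this
  refine ⟨(s.val : ℤ), ?_⟩
  rw [← CharP.intCast_eq_zero_iff (AlgebraicClosure (ZMod p)) p]
  have e : ((s.val : ℕ) : AlgebraicClosure (ZMod p)) = v := by
    rw [← hs]; conv_rhs => rw [← ZMod.natCast_zmod_val s]
    rw [map_natCast]
  push_cast
  rw [e, h]; ring

end

theorem table1_disc31 (u : ℕ → ℤ)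
    (h0 : u 0 = 0) (h1 : u 1 = -1) (h2 : u 2 = -1)
    (hrec : ∀ n, u (n + 3) = -u (n + 1) - u n)
    (p : ℕ) (hp : p.Prime) (hpe : p ∉ ({3, 31} : Set ℕ)) :
    (p : ℤ) ∣ u (p - 1) ↔ ∃ X Y : ℤ, 4 * (p : ℤ) = X ^ 2 + 31 * Y ^ 2 := by
  simp only [Set.mem_insert_iff, Set.mem_singleton_iff, not_or] at hpe
  by_cases hp2 : p = 2
  · subst hp2
    constructor
    · intro h
      norm_num [h1] at h
    · rintro ⟨X, Y, h⟩
      exfalso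
      have hY : Y = 0 := by
        by_contra hY
        have : 0 < Y ^ 2 := by positivity
        push_cast at h
        nlinarith [sq_nonneg X]
      subst hY
      push_cast at h
      have l1 : X < 3 := by nlinarith
      have l2 : -3 < X := by nlinarith
      interval_cases X <;> omega
  have hp3 : 3 < p := by have := hp.two_le; omega
  have : Fact p.Prime := ⟨hp⟩
  obtain ⟨a, b, c, e1, e2, e3⟩ := roots_exist (AlgebraicClosure (ZMod p))
  have hV2 := disc_sq e1 e2 e3
  have hV : (a - b) * (b - c) * (c - a) ≠ 0 := by
    intro h
    rw [h] at hV2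
    have h31 := cast_ne p 31
      (fun hd => hpe.2 ((Nat.prime_dvd_prime_iff_eq hp (by norm_num)).1 hd))
    apply h31
    push_cast
    linear_combination hV2
  have hodd : (p : ℤ) % 2 = 1 := by
    have := (hp.eq_two_or_odd).resolve_left hp2
    omega
  rw [u_iff p e1 e2 e3 hV u h0 h1 h2 hrec]
  constructor
  · intro hF
    have hVp : ((a - b) * (b - c) * (c - a)) ^ p = (a - b) * (b - c) * (c - a) := by
      rw [mul_pow, mul_pow, sub_pow_char, sub_pow_char, sub_pow_char, hF.1, hF.2.1, hF.2.2]
    obtain ⟨s, hs⟩ := sqrt_exists p _ hVp hV2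
    rcases rep_prime p (by omega) s hs with h | ⟨X, Y, h⟩
    · exact h
    · exfalso
      have hY := rep_odd p X Y hodd h
      exact (main_aux p hp3 e1 e2 e3 hV 1 X Y (by norm_num) hY
        (by linear_combination h)).2 rfl hF
  · rintro ⟨X, Y, h⟩
    obtain ⟨X', Y', hY', h'⟩ := rep_start p X Y hodd h
    exact (main_aux p hp3 e1 e2 e3 hV 3 X' Y' (by norm_num) hY' h').1 rfl
end
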